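/- Let I ⊆ [0,∞) be an interval, φ : I → ℝ, and let X : I × (0,1) → ℝ have partial derivatives ∂_t X and ∂_z X satisfying ∂_t X(t,z) = z · ∂_z X(t,z) · (X(t,z) − 1) + z · φ(t) on I × (0,1). Let ψ : I → (0,1) be differentiable with ψ'(t) = ψ(t)(1 − X(t, ψ(t))). Then (d/dt) X(t, ψ(t)) = ψ(t) · φ(t) for all t ∈ I. In particular, if φ ≡ 0 on I, then X(t, ψ(t)) is constant on I, and for any t₀, t ∈ I one has ψ(t) = ψ(t₀) · e^{(t − t₀)(1 − X(t₀, ψ(t₀)))}. -/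

import Mathlib

/-
The function `u (t, x) = 1 - X (t, eˣ)` solves the forced Burgers equation
`∂ₜ u + u ∂ₓ u = -eˣ φ(t)`, and `log ψ` is one of its characteristics. The theorem is the chain rule
along it, so `u` has to be shown Fréchet differentiable, although its partial derivatives need not
be continuous and nothing is assumed about `φ`.

Suppose first that `φ` has a primitive. Adding the accumulated forcing turns `u` approximately into
a solution of Burgers' equation without forcing, and a maximum principle traces its values back
along straight lines. If `u` were discontinuous, Baire's theorem would give a point near which `u`
is uniformly Lipschitz in each variable at all points of discontinuity. In the gaps between these
points `u` is controlled by its values on the boundary of a rectangle, which makes it continuous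
after all. Once `u` is continuous, the same tracing computes its values up to first order.

That `φ` has a primitive near every time also follows from Baire's theorem. Near some time of the
exceptional set, all `u (·, x)` are uniformly Lipschitz at the exceptional times, so that
`∫ u (t, x) dx` can be differentiated under the integral sign there. At the other times its
derivative comes from the divergence theorem. In both cases the derivative is the mass balance,
which gives `φ` as the derivative of an explicit function.
-/

open Set Filter Topology Function

/-- The left time derivative and the space derivative of `f` exist at `(t, x)`, and the resulting
derivative in the direction `∂ₜ + v ∂ₓ` is negative. Left derivatives let the maximum principle
include the final time. -/
def DecreasingAlong (v : ℝ) (f : ℝ → ℝ → ℝ) (t x : ℝ) : Prop :=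
  ∃ ft fx, HasDerivWithinAt (fun s => f s x) ft (Iic t) t ∧ HasDerivAt (f t) fx x ∧
    ft + v * fx < 0

/-- The left time derivative and the space derivative of `w` exist at `(t, x)` and satisfy Burgers'
equation `∂ₜ w + w ∂ₓ w = 0` up to errors less than `η`, one in the equation and one in the
transport velocity. -/
def AlmostBurgers (η : ℝ) (w : ℝ → ℝ → ℝ) (t x : ℝ) : Prop :=
  ∃ v wt wx, HasDerivWithinAt (fun s => w s x) wt (Iic t) t ∧ HasDerivAt (w t) wx x ∧
    |v - w t x| < η ∧ |wt + v * wx| < η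

/-- The position at time `a` of the straight line with velocity `w t x` through `(t, x)`, which is
the characteristic of Burgers' equation through this point. -/
def foot (a : ℝ) (w : ℝ → ℝ → ℝ) (t x : ℝ) : ℝ := x - (t - a) * w t x

section MaximumPrinciple

variable {v : ℝ} {f g : ℝ → ℝ → ℝ} {t x : ℝ}

theorem DecreasingAlong.posPart (h : DecreasingAlong v f t x) (hf : 0 < f t x) :
    DecreasingAlong v (fun s y => max (f s y) 0) t x := by
  obtain ⟨ft, fx, ht, hx, hv⟩ := h
  have heq : max (f t x) 0 = f t x := max_eq_left hf.le
  refine ⟨ft, fx, ht.congr_of_eventuallyEq ?_ heq, hx.congr_of_eventuallyEq ?_, hv⟩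
  · filter_upwards [ht.continuousWithinAt.eventually_const_lt hf] with s hs using max_eq_left hs.le
  · filter_upwards [hx.continuousAt.eventually_const_lt hf] with y hy using max_eq_left hy.le

theorem DecreasingAlong.mul (hf : DecreasingAlong v f t x) (hg : DecreasingAlong v g t x)
    (hf₀ : 0 < f t x) (hg₀ : 0 < g t x) : DecreasingAlong v (fun s y => f s y * g s y) t x := by
  obtain ⟨ft, fx, hft, hfx, hfv⟩ := hf
  obtain ⟨gt, gx, hgt, hgx, hgv⟩ := hg
  refine ⟨_, _, hft.mul hgt, hfx.mul hgx, ?_⟩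
  linarith [mul_neg_of_neg_of_pos hfv hg₀, mul_neg_of_neg_of_pos hgv hf₀]

theorem DecreasingAlong.mul_posPart (hf : DecreasingAlong v f t x) (hg : DecreasingAlong v g t x)
    (hf₀ : 0 < f t x) (hg₀ : 0 < g t x) :
    DecreasingAlong v (fun s y => f s y * max (g s y) 0) t x :=
  hf.mul (hg.posPart hg₀) hf₀ (lt_max_of_lt_left hg₀)

theorem derivWithin_Iic_nonneg_of_isLocalMaxOn {h : ℝ → ℝ} {h' : ℝ}
    (hmax : IsLocalMaxOn h (Iic t) t) (hh : HasDerivWithinAt h h' (Iic t) t) : 0 ≤ h' := by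
  have hseg : segment ℝ t (t + -1) ⊆ Iic t :=
    (convex_Iic t).segment_subset self_mem_Iic (by simp)
  simpa using hmax.hasFDerivWithinAt_nonpos hh.hasFDerivWithinAt
    (mem_posTangentConeAt_of_segment_subset hseg)

theorem exists_boundary_pos {a b c d : ℝ}
    (hf : ContinuousOn (uncurry f) (Icc a b ×ˢ Icc c d))
    (hD : ∀ s ∈ Ioc a b, ∀ y ∈ Ioo c d, 0 < f s y → ∃ v, DecreasingAlong v f s y)
    (ht : t ∈ Icc a b) (hx : x ∈ Icc c d) (hpos : 0 < f t x) :
    ∃ s ∈ Icc a b, ∃ y ∈ Icc c d, 0 < f s y ∧ (s = a ∨ y = c ∨ y = d) := by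
  obtain ⟨⟨s, y⟩, ⟨hs, hy⟩, hmax⟩ :=
    (isCompact_Icc.prod isCompact_Icc).exists_isMaxOn ⟨(t, x), ht, hx⟩ hf
  have hpos' : 0 < f s y := hpos.trans_le (hmax (mk_mem_prod ht hx))
  refine ⟨s, hs, y, hy, hpos', ?_⟩
  by_contra! hne
  have has : a < s := hs.1.lt_of_ne' hne.1
  have hy' : y ∈ Ioo c d := ⟨hy.1.lt_of_ne' hne.2.1, hy.2.lt_of_ne hne.2.2⟩
  obtain ⟨v, ft, fx, hft, hfx, hv⟩ := hD s ⟨has, hs.2⟩ y hy' hpos'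
  have hmax_t : IsLocalMaxOn (fun r => f r y) (Iic s) s := by
    filter_upwards [inter_mem_nhdsWithin _ (Ioi_mem_nhds has)] with r hr
    exact hmax (mk_mem_prod ⟨(mem_Ioi.1 hr.2).le, hr.1.trans hs.2⟩ hy)
  have hmax_x : IsLocalMax (f s) y := by
    filter_upwards [Icc_mem_nhds hy'.1 hy'.2] with z hz using hmax (mk_mem_prod hs hz)
  have hft₀ : 0 ≤ ft := derivWithin_Iic_nonneg_of_isLocalMaxOn hmax_t hft
  rw [hmax_x.hasDerivAt_eq_zero hfx, mul_zero, add_zero] at hv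
  exact hv.not_ge hft₀

end MaximumPrinciple

section Trace

variable {η a b c d k₁ k₂ y₁ y₂ : ℝ} {w : ℝ → ℝ → ℝ} {t x : ℝ}

/-- A test function for the maximum principle: it is positive where the value of `w` lies in
`(k₁, k₂)` and the foot lies in `(y₁, y₂)`, all four bounds being tightened by `2 η (t - a)`. -/
def traceTest (η a k₁ k₂ y₁ y₂ : ℝ) (w : ℝ → ℝ → ℝ) (t x : ℝ) : ℝ :=
  max (w t x - k₁ - 2 * η * (t - a)) 0 * max (k₂ - w t x - 2 * η * (t - a)) 0 *
    max (foot a w t x - y₁ - 2 * η * (t - a)) 0 * max (y₂ - foot a w t x - 2 * η * (t - a)) 0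

theorem mul_posPart_pos_iff {p q : ℝ} (hp : 0 ≤ p) : 0 < p * max q 0 ↔ 0 < p ∧ 0 < q := by
  constructor
  · intro h
    have hq : 0 < max q 0 := pos_of_mul_pos_right h hp
    exact ⟨pos_of_mul_pos_left h hq.le, by simpa using hq⟩
  · rintro ⟨hp, hq⟩
    exact mul_pos hp (lt_max_of_lt_left hq)

theorem traceTest_pos_iff : 0 < traceTest η a k₁ k₂ y₁ y₂ w t x ↔
    w t x ∈ Ioo (k₁ + 2 * η * (t - a)) (k₂ - 2 * η * (t - a)) ∧
      foot a w t x ∈ Ioo (y₁ + 2 * η * (t - a)) (y₂ - 2 * η * (t - a)) := by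
  unfold traceTest
  rw [mul_posPart_pos_iff (by positivity), mul_posPart_pos_iff (by positivity),
    mul_posPart_pos_iff (by positivity), lt_max_iff]
  simp only [mem_Ioo, lt_irrefl, or_false]
  constructor
  · rintro ⟨⟨⟨h₁, h₂⟩, h₃⟩, h₄⟩
    exact ⟨⟨by linarith, by linarith⟩, by linarith, by linarith⟩
  · rintro ⟨⟨h₁, h₂⟩, h₃, h₄⟩
    exact ⟨⟨⟨by linarith, by linarith⟩, by linarith⟩, by linarith⟩

theorem AlmostBurgers.decreasingAlong_traceTest (h : AlmostBurgers η w t x) (ht : t - a ∈ Icc 0 1)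
    (hpos : 0 < traceTest η a k₁ k₂ y₁ y₂ w t x) :
    ∃ v, DecreasingAlong v (traceTest η a k₁ k₂ y₁ y₂ w) t x := by
  obtain ⟨v, wt, wx, hwt, hwx, hv, hw⟩ := h
  obtain ⟨hk, hy⟩ := traceTest_pos_iff.1 hpos
  have hmul : |(t - a) * (wt + v * wx)| ≤ η := by
    rw [abs_mul, abs_of_nonneg ht.1]
    exact (mul_le_of_le_one_left (abs_nonneg _) ht.2).trans hw.le
  rw [abs_le] at hmul
  rw [abs_lt] at hv hw
  have hid : HasDerivWithinAt (fun s => 2 * η * (s - a)) (2 * η * 1) (Iic t) t :=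
    ((hasDerivWithinAt_id t _).sub_const a).const_mul _
  have hft : HasDerivWithinAt (fun s => foot a w s x) (-(1 * w t x + (t - a) * wt)) (Iic t) t :=
    (((hasDerivWithinAt_id t _).sub_const a).mul hwt).const_sub x
  have hfx : HasDerivAt (foot a w t) (1 - (t - a) * wx) x :=
    (hasDerivAt_id x).sub (hwx.const_mul _)
  have h₁ : DecreasingAlong v (fun s y => w s y - k₁ - 2 * η * (s - a)) t x :=
    ⟨_, _, (hwt.sub_const k₁).sub hid, (hwx.sub_const k₁).sub_const _, by linarith⟩
  have h₂ : DecreasingAlong v (fun s y => k₂ - w s y - 2 * η * (s - a)) t x :=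
    ⟨_, _, (hwt.const_sub k₂).sub hid, (hwx.const_sub k₂).sub_const _, by linarith⟩
  have h₃ : DecreasingAlong v (fun s y => foot a w s y - y₁ - 2 * η * (s - a)) t x :=
    ⟨_, _, (hft.sub_const y₁).sub hid, (hfx.sub_const y₁).sub_const _, by linarith⟩
  have h₄ : DecreasingAlong v (fun s y => y₂ - foot a w s y - 2 * η * (s - a)) t x :=
    ⟨_, _, (hft.const_sub y₂).sub hid, (hfx.const_sub y₂).sub_const _, by linarith⟩
  have hk₁ : 0 < w t x - k₁ - 2 * η * (t - a) := by linarith [hk.1]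
  have hk₂ : 0 < k₂ - w t x - 2 * η * (t - a) := by linarith [hk.2]
  have hy₁ : 0 < foot a w t x - y₁ - 2 * η * (t - a) := by linarith [hy.1]
  have hy₂ : 0 < y₂ - foot a w t x - 2 * η * (t - a) := by linarith [hy.2]
  exact ⟨v, (((h₁.posPart hk₁).mul_posPart h₂ (by positivity) hk₂).mul_posPart h₃
    (by positivity) hy₁).mul_posPart h₄ (by positivity) hy₂⟩

theorem continuousWithinAt_traceTest {S : Set (ℝ × ℝ)}
    (hw : ContinuousWithinAt (uncurry w) S (t, x)) :
    ContinuousWithinAt (uncurry (traceTest η a k₁ k₂ y₁ y₂ w)) S (t, x) := by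
  have hw' : ContinuousWithinAt (fun p : ℝ × ℝ => w p.1 p.2) S (t, x) := hw
  have h₁ : ContinuousWithinAt (Prod.fst : ℝ × ℝ → ℝ) S (t, x) := continuous_fst.continuousWithinAt
  have h₂ : ContinuousWithinAt (Prod.snd : ℝ × ℝ → ℝ) S (t, x) := continuous_snd.continuousWithinAt
  unfold traceTest foot uncurry
  fun_prop

/- Near the initial line the foot is close to `x` as long as `w` stays in `(k₁, k₂)`, even where `w`
is discontinuous. -/
theorem eventually_traceTest_eq_zero (hη : 0 ≤ η) (hx : x ∉ Icc y₁ y₂) :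
    ∀ᶠ p in 𝓝[Ici a ×ˢ univ] (a, x), uncurry (traceTest η a k₁ k₂ y₁ y₂ w) p = 0 := by
  have hlim : Tendsto (fun p : ℝ × ℝ => (p.1 - a) * (|k₁| + |k₂|)) (𝓝 (a, x)) (𝓝 0) :=
    Continuous.tendsto' (by fun_prop) _ _ (by simp)
  have hδ : 0 < max (y₁ - x) (x - y₂) := by
    simpa only [lt_max_iff, sub_pos, mem_Icc, not_and_or, not_le] using hx
  have hsnd : ∀ᶠ p : ℝ × ℝ in 𝓝 (a, x), |p.2 - x| < max (y₁ - x) (x - y₂) / 2 :=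
    (Continuous.tendsto' (by fun_prop) _ _ (by simp)).eventually_lt_const (half_pos hδ)
  filter_upwards [nhdsWithin_le_nhds (hlim.eventually_lt_const (half_pos hδ)),
    nhdsWithin_le_nhds hsnd, self_mem_nhdsWithin] with p hp hp₂ hpa
  have hnn : 0 ≤ traceTest η a k₁ k₂ y₁ y₂ w p.1 p.2 := by unfold traceTest; positivity
  refine hnn.antisymm' (not_lt.1 fun hpos => ?_)
  obtain ⟨hk, hy⟩ := traceTest_pos_iff.1 hpos
  have hpa' : 0 ≤ p.1 - a := sub_nonneg.2 hpa.1
  have hs : 0 ≤ 2 * η * (p.1 - a) := by positivity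
  have hw : |w p.1 p.2| ≤ |k₁| + |k₂| := by
    rw [abs_le]
    constructor
    · linarith [hk.1, neg_abs_le k₁, abs_nonneg k₂]
    · linarith [hk.2, le_abs_self k₂, abs_nonneg k₁]
  have hfoot : |p.2 - foot a w p.1 p.2| ≤ (p.1 - a) * (|k₁| + |k₂|) := by
    rw [foot, sub_sub_cancel, abs_mul, abs_of_nonneg hpa']
    gcongr
  rw [abs_le] at hfoot
  rw [abs_lt] at hp₂
  rcases max_choice (y₁ - x) (x - y₂) with hm | hm <;> rw [hm] at hp hp₂ <;>
    linarith [hy.1, hy.2]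

/- The value at `(t, x)` is traced back along its approximate characteristic: the test function is
positive at `(t, x)` and hence, by the maximum principle, somewhere on the parabolic boundary. -/
theorem exists_boundary_of_almostBurgers (hη : 0 ≤ η) (hab : b ≤ a + 1)
    (hw : ∀ s ∈ Ioc a b, ∀ y ∈ Ioo c d, w s y ∈ Ioo k₁ k₂ → AlmostBurgers η w s y)
    (hc : ∀ s ∈ Icc a b, ∀ y ∈ Icc c d, a < s ∨ y ∈ Icc y₁ y₂ →
      ContinuousWithinAt (uncurry w) (Icc a b ×ˢ Icc c d) (s, y))
    (ht : t ∈ Icc a b) (hx : x ∈ Icc c d)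
    (hk : w t x ∈ Ioo (k₁ + 2 * η * (t - a)) (k₂ - 2 * η * (t - a)))
    (hy : foot a w t x ∈ Ioo (y₁ + 2 * η * (t - a)) (y₂ - 2 * η * (t - a))) :
    ∃ s ∈ Icc a b, ∃ y ∈ Icc c d,
      (s = a ∨ y = c ∨ y = d) ∧ w s y ∈ Ioo k₁ k₂ ∧ foot a w s y ∈ Ioo y₁ y₂ := by
  have hcont : ContinuousOn (uncurry (traceTest η a k₁ k₂ y₁ y₂ w)) (Icc a b ×ˢ Icc c d) := by
    rintro ⟨s, y⟩ ⟨hs, hy⟩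
    by_cases hz : a < s ∨ y ∈ Icc y₁ y₂
    · exact continuousWithinAt_traceTest (hc s hs y hy hz)
    · obtain ⟨hsa, hyI⟩ := not_or.1 hz
      obtain rfl : s = a := le_antisymm (not_lt.1 hsa) hs.1
      have hzero := eventually_traceTest_eq_zero (a := s) (k₁ := k₁) (k₂ := k₂) (w := w) hη hyI
      have hmem : (s, y) ∈ Ici s ×ˢ (univ : Set ℝ) := ⟨self_mem_Ici, mem_univ y⟩
      have hcont := continuousWithinAt_const.congr_of_eventuallyEq hzero
        (hzero.self_of_nhdsWithin hmem)
      exact hcont.mono (prod_mono Icc_subset_Ici_self (subset_univ _))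
  have hshrink : ∀ s ∈ Icc a b, ∀ p q : ℝ,
      Ioo (p + 2 * η * (s - a)) (q - 2 * η * (s - a)) ⊆ Ioo p q := fun s hs p q => by
    have hslack : 0 ≤ 2 * η * (s - a) := mul_nonneg (by positivity) (sub_nonneg.2 hs.1)
    exact Ioo_subset_Ioo (by linarith) (by linarith)
  obtain ⟨s, hs, y, hyI, hpos, hbd⟩ := exists_boundary_pos hcont
    (fun s hs y hy hpos => (hw s hs y hy (hshrink s (Ioc_subset_Icc_self hs) _ _
      (traceTest_pos_iff.1 hpos).1)).decreasingAlong_traceTest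
        ⟨by linarith [hs.1], by linarith [hs.2]⟩ hpos)
    ht hx (traceTest_pos_iff.2 ⟨hk, hy⟩)
  obtain ⟨hk', hy'⟩ := traceTest_pos_iff.1 hpos
  exact ⟨s, hs, y, hyI, hbd, hshrink s hs _ _ hk', hshrink s hs _ _ hy'⟩

end Trace

section RectangleWithBadCorners

variable {ε a b c d u₀ : ℝ} {w : ℝ → ℝ → ℝ}

/-- The function `w` is an approximate solution of Burgers' equation in the rectangle
`[a, b] × [c, d]`, it is continuous there except perhaps at the two initial corners, and its values
on the initial and lateral sides are within `ε` of `u₀`. -/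
structure NearConstantBoundary (ε u₀ a b c d : ℝ) (w : ℝ → ℝ → ℝ) : Prop where
  le_add_one : b ≤ a + 1
  almostBurgers : ∀ s ∈ Ioc a b, ∀ y ∈ Ioo c d, |w s y - u₀| < 16 * ε → AlmostBurgers (ε / 3) w s y
  continuousWithinAt : ∀ s ∈ Icc a b, ∀ y ∈ Icc c d, a < s ∨ y ≠ c ∧ y ≠ d →
    ContinuousWithinAt (uncurry w) (Icc a b ×ˢ Icc c d) (s, y)
  initial : ∀ y ∈ Icc c d, |w a y - u₀| ≤ ε
  left : ∀ s ∈ Icc a b, |w s c - u₀| ≤ ε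
  right : ∀ s ∈ Icc a b, |w s d - u₀| ≤ ε

/- A value far from the boundary values can only come from a corner. -/
theorem NearConstantBoundary.foot_near_corner (h : NearConstantBoundary ε u₀ a b c d w)
    (hε : 0 < ε) {t x : ℝ} (ht : t ∈ Ioc a b) (hx : x ∈ Icc c d)
    (hlow : 3 * ε ≤ |w t x - u₀|) (hup : |w t x - u₀| ≤ 14 * ε) :
    |foot a w t x - c| ≤ ε * (t - a) ∨ |foot a w t x - d| ≤ ε * (t - a) := by
  by_contra! hfar
  have hta : 0 < t - a := sub_pos.2 ht.1
  have hεt : 0 < ε * (t - a) := mul_pos hε hta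
  have hεt' : ε * (t - a) ≤ ε := mul_le_of_le_one_right hε.le (by linarith [h.le_add_one, ht.2])
  have hcorner : ∀ y ∈ Icc (foot a w t x - ε * (t - a)) (foot a w t x + ε * (t - a)),
      y ≠ c ∧ y ≠ d := by
    refine fun y hy => ⟨?_, ?_⟩ <;> rintro rfl
    · exact hfar.1.not_ge (abs_le.2 ⟨by linarith [hy.2], by linarith [hy.1]⟩)
    · exact hfar.2.not_ge (abs_le.2 ⟨by linarith [hy.2], by linarith [hy.1]⟩)
  have hlevel : ∀ k ∈ Ioo (w t x - 2 * ε) (w t x + 2 * ε), ε < |k - u₀| ∧ |k - u₀| < 16 * ε := by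
    intro k hk
    have hk' : |w t x - k| < 2 * ε := abs_lt.2 ⟨by linarith [hk.2], by linarith [hk.1]⟩
    constructor
    · linarith [abs_sub_le (w t x) k u₀]
    · linarith [abs_sub_le k (w t x) u₀, abs_sub_comm k (w t x)]
  obtain ⟨s, hs, y, hy, hbd, hk, -⟩ := exists_boundary_of_almostBurgers (by positivity)
    h.le_add_one (fun s hs y hy hk => h.almostBurgers s hs y hy (hlevel _ hk).2)
    (fun s hs y hy hsy => h.continuousWithinAt s hs y hy (hsy.imp_right (hcorner y)))
    (Ioc_subset_Icc_self ht) hx ⟨by linarith, by linarith⟩ ⟨by linarith, by linarith⟩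
  refine (hlevel _ hk).1.not_ge ?_
  rcases hbd with rfl | rfl | rfl
  exacts [h.initial y hy, h.left s hs, h.right s hs]

theorem exists_three_levels {g : ℝ → ℝ} {p q k δ : ℝ} (hpq : p ≤ q) (hg : ContinuousOn g (Icc p q))
    (hδ : 0 < δ) (hp : k + δ ≤ g p) (hq : g q ≤ k - δ) :
    ∃ ξ₁ ∈ Icc p q, ∃ ξ₂ ∈ Icc p q, ∃ ξ₃ ∈ Icc p q, ξ₁ < ξ₂ ∧ ξ₂ < ξ₃ ∧
      g ξ₁ = k + δ ∧ g ξ₂ = k ∧ g ξ₃ = k - δ := by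
  obtain ⟨ξ₂, h₂, hg₂⟩ : k ∈ g '' Icc p q :=
    intermediate_value_Icc' hpq hg ⟨by linarith, by linarith⟩
  obtain ⟨ξ₁, h₁, hg₁⟩ := intermediate_value_Icc' h₂.1 (hg.mono (Icc_subset_Icc_right h₂.2))
    ⟨by linarith, hp⟩
  obtain ⟨ξ₃, h₃, hg₃⟩ := intermediate_value_Icc' h₂.2 (hg.mono (Icc_subset_Icc_left h₂.1))
    ⟨hq, by linarith⟩
  refine ⟨ξ₁, ⟨h₁.1, h₁.2.trans h₂.2⟩, ξ₂, h₂, ξ₃, ⟨h₂.1.trans h₃.1, h₃.2⟩, h₁.2.lt_of_ne ?_,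
    h₃.1.lt_of_ne ?_, hg₁, hg₂, hg₃⟩ <;> rintro rfl <;> linarith

/- Where `w` drops by `8 ε` there are three points whose feet are more than `4 ε (t - a)` apart, but
there are only two corners. -/
theorem NearConstantBoundary.not_drop (h : NearConstantBoundary ε u₀ a b c d w)
    (hε : 0 < ε) {t p q k : ℝ} (ht : t ∈ Ioc a b) (hp : p ∈ Icc c d) (hq : q ∈ Icc c d)
    (hpq : p ≤ q) (hk : |k - u₀| = 10 * ε) (hwp : k + 4 * ε ≤ w t p) : k - 4 * ε < w t q := by
  by_contra! hwq
  have hta : 0 < t - a := sub_pos.2 ht.1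
  have hsub : Icc p q ⊆ Icc c d := Icc_subset_Icc hp.1 hq.2
  have hcont : ContinuousOn (w t) (Icc p q) := fun y hy =>
    (h.continuousWithinAt t (Ioc_subset_Icc_self ht) y (hsub hy) (Or.inl ht.1)).comp
      (Continuous.prodMk_right t).continuousWithinAt
      fun z hz => mk_mem_prod (Ioc_subset_Icc_self ht) (hsub hz)
  obtain ⟨ξ₁, h₁, ξ₂, h₂, ξ₃, h₃, h₁₂, h₂₃, hw₁, hw₂, hw₃⟩ :=
    exists_three_levels hpq hcont (by positivity) hwp hwq
  have hcorner : ∀ ξ ∈ Icc p q, |w t ξ - k| ≤ 4 * ε →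
      |foot a w t ξ - c| ≤ ε * (t - a) ∨ |foot a w t ξ - d| ≤ ε * (t - a) := fun ξ hξ hwξ =>
    h.foot_near_corner hε ht (hsub hξ)
      (by linarith [abs_sub_le k (w t ξ) u₀, abs_sub_comm k (w t ξ)])
      (by linarith [abs_sub_le (w t ξ) k u₀])
  have hεt : 0 < ε * (t - a) := mul_pos hε hta
  have hf₁₂ : foot a w t ξ₁ + 4 * (ε * (t - a)) < foot a w t ξ₂ := by
    simp only [foot, hw₁, hw₂]; linarith
  have hf₂₃ : foot a w t ξ₂ + 4 * (ε * (t - a)) < foot a w t ξ₃ := by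
    simp only [foot, hw₂, hw₃]; linarith
  have hc₁ := hcorner ξ₁ h₁ (by rw [hw₁, add_sub_cancel_left, abs_of_pos (by positivity)])
  have hc₂ := hcorner ξ₂ h₂ (by rw [hw₂, sub_self, abs_zero]; positivity)
  have hc₃ := hcorner ξ₃ h₃ (by rw [hw₃, sub_sub_cancel_left, abs_neg, abs_of_pos (by positivity)])
  simp only [abs_le] at hc₁ hc₂ hc₃
  grind

theorem NearConstantBoundary.abs_sub_le (h : NearConstantBoundary ε u₀ a b c d w) (hε : 0 < ε)
    {t x : ℝ} (ht : t ∈ Icc a b) (hx : x ∈ Icc c d) : |w t x - u₀| ≤ 14 * ε := by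
  rcases ht.1.eq_or_lt with rfl | hat
  · linarith [h.initial x hx]
  have hc : c ∈ Icc c d := left_mem_Icc.2 (hx.1.trans hx.2)
  have hd : d ∈ Icc c d := right_mem_Icc.2 (hx.1.trans hx.2)
  have hε' : 0 ≤ 10 * ε := by positivity
  by_contra! hlt
  rcases lt_abs.1 hlt with hgt | hgt
  · have hdrop := h.not_drop hε ⟨hat, ht.2⟩ hx hd hx.2 (k := u₀ + 10 * ε)
      (by rw [add_sub_cancel_left, abs_of_nonneg hε']) (by linarith)
    linarith [(abs_le.1 (h.right t ht)).2]
  · have hdrop := h.not_drop hε ⟨hat, ht.2⟩ hc hx hx.1 (k := u₀ - 10 * ε)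
      (by rw [sub_sub_cancel_left, abs_neg, abs_of_nonneg hε'])
      (by linarith [(abs_le.1 (h.left t ht)).1])
    linarith

end RectangleWithBadCorners

section Baire

theorem isLocallyClosed_of_ordConnected {α : Type*} [ConditionallyCompleteLinearOrder α]
    [TopologicalSpace α] [OrderTopology α] [DenselyOrdered α] {I : Set α} (hI : I.OrdConnected) :
    IsLocallyClosed I := by
  have h := hI.isPreconnected.mem_intervals
  simp only [mem_insert_iff, mem_singleton_iff] at h
  rcases h with h | h | h | h | h | h | h | h | h | h <;> rw [h]
  exacts [isLocallyClosed_Icc, isLocallyClosed_Ico, isLocallyClosed_Ioc, isLocallyClosed_Ioo,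
    isClosed_Ici.isLocallyClosed, isOpen_Ioi.isLocallyClosed, isClosed_Iic.isLocallyClosed,
    isOpen_Iio.isLocallyClosed, isOpen_univ.isLocallyClosed, isOpen_empty.isLocallyClosed]

theorem isLocallyClosed_prod {X Y : Type*} [TopologicalSpace X] [TopologicalSpace Y] {s : Set X}
    {t : Set Y} (hs : IsLocallyClosed s) (ht : IsLocallyClosed t) : IsLocallyClosed (s ×ˢ t) :=
  (hs.preimage continuous_fst).inter (ht.preimage continuous_snd)

theorem exists_isOpen_inter_subset_of_subset_iUnion {X : Type*} [TopologicalSpace X] [T2Space X]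
    [LocallyCompactSpace X] {K : Set X} (hK : IsLocallyClosed K) (hne : K.Nonempty) {E : ℕ → Set X}
    (hE : ∀ n, ∀ x ∈ K, x ∈ closure (E n ∩ K) → x ∈ E n) (hcov : K ⊆ ⋃ n, E n) :
    ∃ n, ∃ V, IsOpen V ∧ (V ∩ K).Nonempty ∧ V ∩ K ⊆ E n := by
  have : LocallyCompactSpace K := hK.locallyCompactSpace
  have : Nonempty K := hne.to_subtype
  have hclosed : ∀ n, IsClosed ((↑) ⁻¹' E n : Set K) := fun n => by
    refine isClosed_of_closure_subset fun x hx => hE n x x.2 ?_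
    have himage : (x : X) ∈ (↑) '' closure ((↑) ⁻¹' E n : Set K) := mem_image_of_mem _ hx
    simpa only [Subtype.image_preimage_coe, inter_comm] using
      image_closure_subset_closure_image continuous_subtype_val himage
  obtain ⟨n, ⟨x, hxK⟩, U, ⟨hU, hUE⟩, hxU⟩ := nonempty_interior_of_iUnion_of_closed hclosed
    (eq_univ_of_forall fun x => by simpa using hcov x.2)
  obtain ⟨V, hV, rfl⟩ := isOpen_induced_iff.1 hU
  exact ⟨n, V, hV, ⟨x, hxU, hxK⟩, fun y hy => hUE (a := ⟨y, hy.2⟩) hy.1⟩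

/-- `f` satisfies at `s` a pointwise Lipschitz bound with constant `n` at scale `1 / (n + 1)` within
`A`. Quantizing both constants by one natural number prepares the use of Baire's theorem. -/
def LipschitzFrom (n : ℕ) (f : ℝ → ℝ) (A : Set ℝ) (s : ℝ) : Prop :=
  ∀ r ∈ A, |r - s| < 1 / (n + 1) → |f r - f s| ≤ n * |r - s|

variable {n : ℕ} {F : ℝ → ℝ → ℝ} {A B : Set ℝ} {t x : ℝ}

theorem eventually_lipschitzFrom {f : ℝ → ℝ} {s : ℝ} (hf : DifferentiableWithinAt ℝ f A s) :
    ∀ᶠ n in atTop, LipschitzFrom n f A s := by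
  obtain ⟨C, hC⟩ := hf.isBigO_sub.bound
  obtain ⟨δ, hδ, hball⟩ := Metric.mem_nhdsWithin_iff.1 hC
  filter_upwards [tendsto_natCast_atTop_atTop.eventually_ge_atTop C,
    tendsto_one_div_add_atTop_nhds_zero_nat.eventually_lt_const hδ] with n hn hnδ r hr hrs
  have hrC : ‖f r - f s‖ ≤ C * ‖r - s‖ := hball ⟨by simpa [Real.dist_eq] using hrs.trans hnδ, hr⟩
  exact hrC.trans (by gcongr; rfl)

variable {ι : Type*} {l : Filter ι} {T X : ι → ℝ}

theorem tendsto_of_lipschitzFrom (hF : ContinuousWithinAt (F t) B x) (ht : t ∈ A)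
    (hT : Tendsto T l (𝓝 t)) (hX : Tendsto X l (𝓝[B] x))
    (hlip : ∀ᶠ k in l, LipschitzFrom n (fun s => F s (X k)) A (T k)) :
    Tendsto (fun k => F (T k) (X k)) l (𝓝 (F t x)) := by
  have hdist : Tendsto (fun k => |t - T k|) l (𝓝 0) := by
    simpa using ((tendsto_const_nhds (x := t)).sub hT).abs
  have hdiff : Tendsto (fun k => F t (X k) - F (T k) (X k)) l (𝓝 0) := by
    refine squeeze_zero_norm' ?_ (by simpa using hdist.const_mul (n : ℝ))
    filter_upwards [hlip, hdist.eventually_lt_const (by positivity : (0 : ℝ) < 1 / (n + 1))]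
      with k hk hkt using hk t ht hkt
  simpa using (hF.tendsto.comp hX).sub hdiff

theorem lipschitzFrom_of_tendsto [l.NeBot] (hF : ∀ s ∈ A, ContinuousWithinAt (F s) B x)
    (ht : t ∈ A) (hT : Tendsto T l (𝓝 t)) (hX : Tendsto X l (𝓝[B] x))
    (hlip : ∀ᶠ k in l, LipschitzFrom n (fun s => F s (X k)) A (T k)) :
    LipschitzFrom n (fun s => F s x) A t := by
  intro s hs hst
  have hdist : Tendsto (fun k => |s - T k|) l (𝓝 |s - t|) := (tendsto_const_nhds.sub hT).abs
  refine le_of_tendsto_of_tendsto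
    (((hF s hs).tendsto.comp hX).sub (tendsto_of_lipschitzFrom (hF t ht) ht hT hX hlip)).abs
    (hdist.const_mul _) ?_
  filter_upwards [hlip, hdist.eventually_lt_const hst] with k hk hks using hk s hs hks

/- Separate continuity suffices for the closedness needed in Baire's theorem, by
`lipschitzFrom_of_tendsto` in each of the two variables. -/
theorem exists_isOpen_lipschitzFrom {K : Set (ℝ × ℝ)} (hK : IsLocallyClosed K) (hne : K.Nonempty)
    (hKS : K ⊆ A ×ˢ B) (ht : ∀ t ∈ A, ∀ x ∈ B, DifferentiableWithinAt ℝ (fun s => F s x) A t)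
    (hx : ∀ t ∈ A, ∀ x ∈ B, DifferentiableWithinAt ℝ (F t) B x) :
    ∃ n, ∃ V, IsOpen V ∧ (V ∩ K).Nonempty ∧ ∀ p ∈ V ∩ K,
      LipschitzFrom n (fun s => F s p.2) A p.1 ∧ LipschitzFrom n (F p.1) B p.2 := by
  set E : ℕ → Set (ℝ × ℝ) := fun n =>
    {p | LipschitzFrom n (fun s => F s p.2) A p.1 ∧ LipschitzFrom n (F p.1) B p.2}
  refine exists_isOpen_inter_subset_of_subset_iUnion hK hne (E := E) (fun n p hp hcl => ?_)
    fun p hp => ?_ <;> obtain ⟨hpA, hpB⟩ := hKS hp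
  · have : (𝓝[E n ∩ K] p).NeBot := mem_closure_iff_nhdsWithin_neBot.1 hcl
    have hmem : ∀ᶠ q in 𝓝[E n ∩ K] p, q ∈ E n ∩ K := self_mem_nhdsWithin
    have hT : Tendsto Prod.fst (𝓝[E n ∩ K] p) (𝓝[A] p.1) :=
      continuous_fst.continuousWithinAt.tendsto_nhdsWithin fun q hq => (hKS hq.2).1
    have hX : Tendsto Prod.snd (𝓝[E n ∩ K] p) (𝓝[B] p.2) :=
      continuous_snd.continuousWithinAt.tendsto_nhdsWithin fun q hq => (hKS hq.2).2
    exact ⟨lipschitzFrom_of_tendsto (fun s hs => (hx s hs _ hpB).continuousWithinAt) hpA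
        (hT.mono_right nhdsWithin_le_nhds) hX (hmem.mono fun q hq => hq.1.1),
      lipschitzFrom_of_tendsto (F := fun y s => F s y)
        (fun y hy => (ht _ hpA y hy).continuousWithinAt) hpB
        (hX.mono_right nhdsWithin_le_nhds) hT (hmem.mono fun q hq => hq.1.2)⟩
  · exact mem_iUnion.2 ((eventually_lipschitzFrom (ht _ hpA _ hpB)).and
      (eventually_lipschitzFrom (hx _ hpA _ hpB))).exists

end Baire

/-- `u` solves Burgers' equation `∂ₜ u + u ∂ₓ u = -eˣ φ(t)` pointwise at the times in `I` and for
`x < 0`, the partial derivatives being assumed to exist but not to be continuous. The critical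
forest fire equation takes this form for `u (t, x) = 1 - X (t, eˣ)`. -/
def IsForcedBurgers (φ : ℝ → ℝ) (u : ℝ → ℝ → ℝ) (I : Set ℝ) : Prop :=
  ∀ t ∈ I, ∀ x < 0, ∃ ux, HasDerivAt (u t) ux x ∧
    HasDerivWithinAt (fun s => u s x) (-(u t x * ux) - Real.exp x * φ t) I t

/-- The solution `u` with the effect of the forcing since time `a` removed, `Φ` being a primitive of
`φ`. -/
noncomputable def unforced (Φ : ℝ → ℝ) (a : ℝ) (u : ℝ → ℝ → ℝ) (t x : ℝ) : ℝ :=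
  u t x + Real.exp x * (Φ t - Φ a)

section ForcedBurgers

variable {φ Φ : ℝ → ℝ} {u : ℝ → ℝ → ℝ} {I : Set ℝ} {a t x : ℝ}

theorem IsForcedBurgers.mono {J : Set ℝ} (hu : IsForcedBurgers φ u I) (hJ : J ⊆ I) :
    IsForcedBurgers φ u J := fun t ht x hx => by
  obtain ⟨ux, hux, hut⟩ := hu t (hJ ht) x hx
  exact ⟨ux, hux, hut.mono hJ⟩

theorem IsForcedBurgers.differentiableWithinAt (hu : IsForcedBurgers φ u I) (ht : t ∈ I)
    (hx : x < 0) : DifferentiableWithinAt ℝ (fun s => u s x) I t := by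
  obtain ⟨ux, -, hut⟩ := hu t ht x hx
  exact hut.differentiableWithinAt

theorem IsForcedBurgers.differentiableAt (hu : IsForcedBurgers φ u I) (ht : t ∈ I) (hx : x < 0) :
    DifferentiableAt ℝ (u t) x := by
  obtain ⟨ux, hux, -⟩ := hu t ht x hx
  exact hux.differentiableAt

theorem hasDerivWithinAt_neg_comp_neg {f : ℝ → ℝ} {f' : ℝ}
    (h : HasDerivWithinAt f f' I (-t)) :
    HasDerivWithinAt (fun s => -f (-s)) f' (Neg.neg ⁻¹' I) t :=
  (HasDerivWithinAt.comp t h (hasDerivWithinAt_neg t _) (mapsTo_preimage _ _)).neg.congr_deriv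
    (by ring)

theorem IsForcedBurgers.timeReversal (hu : IsForcedBurgers φ u I) :
    IsForcedBurgers (fun t => φ (-t)) (fun t x => -u (-t) x) (Neg.neg ⁻¹' I) := fun t ht x hx => by
  obtain ⟨ux, hux, hut⟩ := hu (-t) ht x hx
  exact ⟨-ux, hux.neg, (hasDerivWithinAt_neg_comp_neg hut).congr_deriv (by ring)⟩

theorem abs_unforced_sub_le (hx : x < 0) : |unforced Φ a u t x - u t x| ≤ |Φ t - Φ a| := by
  rw [unforced, add_sub_cancel_left, abs_mul, Real.abs_exp]
  exact mul_le_of_le_one_left (abs_nonneg _) (Real.exp_le_one_iff.2 hx.le)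

theorem IsForcedBurgers.almostBurgers_unforced {η : ℝ} (hu : IsForcedBurgers φ u I)
    (hI : I ∈ 𝓝[≤] t) (hx : x < 0) (hΦ : HasDerivWithinAt Φ (φ t) I t)
    (hη : (|u t x| + 1) * |Φ t - Φ a| < η) : AlmostBurgers η (unforced Φ a u) t x := by
  obtain ⟨ux, hux, hut⟩ := hu t (mem_of_mem_nhdsWithin self_mem_Iic hI) x hx
  refine ⟨u t x, _, _,
    (hut.add ((hΦ.sub_const (Φ a)).const_mul (Real.exp x))).mono_of_mem_nhdsWithin hI,
    hux.add ((Real.hasDerivAt_exp x).mul_const (Φ t - Φ a)), ?_, ?_⟩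
  · rw [abs_sub_comm]
    refine (abs_unforced_sub_le hx).trans_lt ((le_mul_of_one_le_left (abs_nonneg _) ?_).trans_lt hη)
    linarith [abs_nonneg (u t x)]
  · calc |-(u t x * ux) - Real.exp x * φ t + Real.exp x * φ t
          + u t x * (ux + Real.exp x * (Φ t - Φ a))|
        = |u t x| * (Real.exp x * |Φ t - Φ a|) := by
          rw [← Real.abs_exp x, ← abs_mul, ← abs_mul, Real.abs_exp]; ring_nf
      _ ≤ |u t x| * |Φ t - Φ a| := by
          gcongr
          exact mul_le_of_le_one_left (abs_nonneg _) (Real.exp_le_one_iff.2 hx.le)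
      _ ≤ (|u t x| + 1) * |Φ t - Φ a| := by gcongr; linarith
      _ < η := hη

end ForcedBurgers

section CrossBound

variable {u : ℝ → ℝ → ℝ} {I : Set ℝ} {K : Set (ℝ × ℝ)} {t₀ x₀ : ℝ}

/- The sides of the rectangle are taken from the projections of `K` to the two axes. -/
theorem exists_gap_rectangle {t l m x : ℝ} (hK : IsClosed K) (hp : (t₀, x₀) ∈ K)
    (hx₀ : x₀ ∈ Icc l m) (ht : t₀ ≤ t) (hx : x ∈ Icc l m) :
    ∃ a ∈ Icc t₀ t, ∃ c ∈ Icc l x, ∃ d ∈ Icc x m,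
      (∃ y ∈ Icc l m, (a, y) ∈ K) ∧ (c = l ∨ ∃ s ∈ Icc t₀ t, (s, c) ∈ K) ∧
      (d = m ∨ ∃ s ∈ Icc t₀ t, (s, d) ∈ K) ∧
      ∀ s ∈ Icc a t, ∀ y ∈ Icc c d, (s, y) ∈ K → s = a ∧ (y = c ∨ y = d) := by
  have hbox : IsCompact (K ∩ Icc t₀ t ×ˢ Icc l m) :=
    (isCompact_Icc.prod isCompact_Icc).inter_left hK
  have hrows := hbox.image continuous_fst
  have hcols := hbox.image continuous_snd
  obtain ⟨a, ⟨⟨_, ya⟩, ⟨hya, hat, hyal⟩, rfl⟩, ha⟩ :=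
    hrows.exists_isGreatest ⟨t₀, _, ⟨hp, left_mem_Icc.2 ht, hx₀⟩, rfl⟩
  obtain ⟨c, ⟨hc, hcx⟩, hcmax⟩ :=
    ((hcols.insert l).inter_right (isClosed_Iic (a := x))).exists_isGreatest
      ⟨l, mem_insert _ _, hx.1⟩
  obtain ⟨d, ⟨hd, hdx⟩, hdmin⟩ :=
    ((hcols.insert m).inter_right (isClosed_Ici (a := x))).exists_isLeast
      ⟨m, mem_insert _ _, hx.2⟩
  have hlc : l ≤ c := hcmax ⟨mem_insert _ _, hx.1⟩
  have hdm : d ≤ m := hdmin ⟨mem_insert _ _, hx.2⟩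
  refine ⟨_, hat, c, ⟨hlc, hcx⟩, d, ⟨hdx, hdm⟩, ⟨ya, hyal, hya⟩, hc.imp_right ?_, hd.imp_right ?_,
    fun s hs y hy hsy => ?_⟩
  · rintro ⟨⟨s, _⟩, ⟨hq, hs, -⟩, rfl⟩
    exact ⟨s, hs, hq⟩
  · rintro ⟨⟨s, _⟩, ⟨hq, hs, -⟩, rfl⟩
    exact ⟨s, hs, hq⟩
  · have hq : (s, y) ∈ K ∩ Icc t₀ t ×ˢ Icc l m :=
      ⟨hsy, ⟨hat.1.trans hs.1, hs.2⟩, hlc.trans hy.1, hy.2.trans hdm⟩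
    refine ⟨(ha (mem_image_of_mem _ hq)).antisymm hs.1, ?_⟩
    have hcol : y ∈ Prod.snd '' (K ∩ Icc t₀ t ×ˢ Icc l m) := mem_image_of_mem _ hq
    rcases le_total y x with hyx | hxy
    · exact Or.inl ((hcmax ⟨mem_insert_of_mem _ hcol, hyx⟩).antisymm hy.1)
    · exact Or.inr (hy.2.antisymm (hdmin ⟨mem_insert_of_mem _ hcol, hxy⟩))

/-- The horizontal and vertical segments through the points of `K` near `(t₀, x₀)`, at distance at
most `r`, carry values of `u` within `ε` of `u t₀ x₀`. -/
def CrossBound (u : ℝ → ℝ → ℝ) (I : Set ℝ) (K : Set (ℝ × ℝ)) (t₀ x₀ ε r : ℝ) : Prop :=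
  ∀ t ∈ I, ∀ x, (t, x) ∈ K → |t - t₀| ≤ r → |x - x₀| ≤ r →
    (∀ s ∈ I, |s - t₀| ≤ r → |u s x - u t₀ x₀| ≤ ε) ∧
      ∀ y, |y - x₀| ≤ r → |u t y - u t₀ x₀| ≤ ε

theorem crossBound_of_lipschitzFrom {n : ℕ} {r : ℝ} (ht₀ : t₀ ∈ I) (hp : (t₀, x₀) ∈ K)
    (hr : 0 ≤ r) (hrn : 2 * r < 1 / (n + 1)) (hrx : x₀ + r < 0)
    (hlip : ∀ t ∈ I, ∀ x < 0, (t, x) ∈ K → |t - t₀| ≤ r → |x - x₀| ≤ r →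
      LipschitzFrom n (fun s => u s x) I t ∧ LipschitzFrom n (u t) (Iio 0) x) :
    CrossBound u I K t₀ x₀ (6 * n * r) r := fun t ht x hK htr hxr => by
  have hneg : ∀ y, |y - x₀| ≤ r → y < 0 := fun y hy => by linarith [(abs_le.1 hy).2]
  have hn : ∀ z : ℝ, |z| ≤ 2 * r → n * |z| ≤ 2 * n * r := fun z hz => by
    nlinarith [(Nat.cast_nonneg n : (0 : ℝ) ≤ n)]
  have htime : ∀ s ∈ I, ∀ s' ∈ I, ∀ y, (s, y) ∈ K → |y - x₀| ≤ r → |s - t₀| ≤ r → |s' - t₀| ≤ r →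
      |u s' y - u s y| ≤ 2 * n * r := fun s hs s' hs' y hK hyr hsr hsr' => by
    have hss : |s' - s| ≤ 2 * r := by linarith [abs_sub_le s' t₀ s, abs_sub_comm s t₀]
    exact ((hlip s hs y (hneg y hyr) hK hsr hyr).1 s' hs' (hss.trans_lt hrn)).trans (hn _ hss)
  have hspace : ∀ y, |y - x₀| ≤ r → |u t y - u t x| ≤ 2 * n * r := fun y hyr => by
    have hyx : |y - x| ≤ 2 * r := by linarith [abs_sub_le y x₀ x, abs_sub_comm x x₀]
    exact ((hlip t ht x (hneg x hxr) hK htr hxr).2 y (hneg y hyr) (hyx.trans_lt hrn)).trans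
      (hn _ hyx)
  have hr₀ : ∀ z : ℝ, |z - z| ≤ r := fun z => by rwa [sub_self, abs_zero]
  have hval : |u t x - u t₀ x₀| ≤ 4 * n * r := by
    linarith [abs_sub_le (u t x) (u t x₀) (u t₀ x₀), abs_sub_comm (u t x) (u t x₀),
      hspace x₀ (hr₀ _), htime t₀ ht₀ t ht x₀ hp (hr₀ _) (hr₀ _) htr]
  exact ⟨fun s hs hsr => by
      linarith [abs_sub_le (u s x) (u t x) (u t₀ x₀), htime t ht s hs x hK hxr htr hsr],
    fun y hyr => by linarith [abs_sub_le (u t y) (u t x) (u t₀ x₀), hspace y hyr]⟩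

theorem eventually_crossBound {n : ℕ} {ε : ℝ} (hε : 0 < ε) (ht₀ : t₀ ∈ I) (hx₀ : x₀ < 0)
    (hp : (t₀, x₀) ∈ K)
    (hlip : ∀ᶠ p in 𝓝[K ∩ I ×ˢ Iio 0] (t₀, x₀),
      LipschitzFrom n (fun s => u s p.2) I p.1 ∧ LipschitzFrom n (u p.1) (Iio 0) p.2) :
    ∀ᶠ r in 𝓝[>] 0, CrossBound u I K t₀ x₀ ε r := by
  obtain ⟨δ, hδ, hball⟩ := Metric.mem_nhdsWithin_iff.1 hlip
  have hsmall : ∀ C c : ℝ, 0 < c → ∀ᶠ r in 𝓝[>] (0 : ℝ), C * r < c := fun C c hc =>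
    (tendsto_nhdsWithin_of_tendsto_nhds
      (Continuous.tendsto' (by fun_prop) _ _ (mul_zero C))).eventually_lt_const hc
  filter_upwards [hsmall 1 δ hδ, hsmall 1 (-x₀) (neg_pos.2 hx₀),
    hsmall 2 (1 / (n + 1)) (by positivity), hsmall (6 * n) ε hε, self_mem_nhdsWithin]
    with r hrδ hrx hrn hrε (hr : 0 < r) t ht x hK htr hxr
  obtain ⟨htime, hspace⟩ := crossBound_of_lipschitzFrom ht₀ hp hr.le hrn (by linarith)
    (fun s hs y hy hK hsr hyr => hball (a := (s, y))
      ⟨by simpa [Prod.dist_eq, Real.dist_eq] using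
        ⟨hsr.trans_lt (by linarith), hyr.trans_lt (by linarith)⟩, hK, hs, hy⟩) t ht x hK htr hxr
  exact ⟨fun s hs hsr => (htime s hs hsr).trans hrε.le, fun y hyr => (hspace y hyr).trans hrε.le⟩

end CrossBound

section JointContinuity

variable {φ Φ : ℝ → ℝ} {u : ℝ → ℝ → ℝ} {I : Set ℝ} {K : Set (ℝ × ℝ)} {t₀ x₀ ε r : ℝ}

theorem continuousWithinAt_uncurry_unforced {S : Set ℝ} {s y a : ℝ}
    (hu : ContinuousWithinAt (uncurry u) (I ×ˢ S) (s, y)) (hΦ : ContinuousWithinAt Φ I s) :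
    ContinuousWithinAt (uncurry (unforced Φ a u)) (I ×ˢ S) (s, y) := by
  have hexp : ContinuousWithinAt (fun q : ℝ × ℝ => Real.exp q.2) (I ×ˢ S) (s, y) := by fun_prop
  have hΦ' : ContinuousWithinAt (fun q : ℝ × ℝ => Φ q.1) (I ×ˢ S) (s, y) :=
    ContinuousWithinAt.comp (f := Prod.fst) hΦ continuousWithinAt_fst fun _ hq => hq.1
  exact hu.add (hexp.mul (hΦ'.sub continuousWithinAt_const))

theorem abs_unforced_sub_le_of_mul_lt {a t x C : ℝ} (hx : x < 0) (hC : 1 ≤ C)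
    (h : C * |Φ t - Φ a| < ε) : |unforced Φ a u t x - u t x| ≤ ε :=
  (abs_unforced_sub_le hx).trans ((le_mul_of_one_le_left (abs_nonneg _) hC).trans h.le)

theorem IsForcedBurgers.nearConstantBoundary_unforced {a c d t u₀ : ℝ}
    (hu : IsForcedBurgers φ u I) (hε : 0 < ε) (hI : Icc a t ⊆ I) (hta : t ≤ a + 1) (hd : d < 0)
    (hΦ : ∀ s ∈ Icc a t, HasDerivWithinAt Φ (φ s) I s)
    (hΦε : ∀ s ∈ Icc a t, (|u₀| + 49 * ε + 1) * |Φ s - Φ a| < ε)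
    (hcont : ∀ s ∈ Icc a t, ∀ y ∈ Icc c d, a < s ∨ y ≠ c ∧ y ≠ d →
      ContinuousWithinAt (uncurry u) (I ×ˢ Iio 0) (s, y))
    (hinit : ∀ y ∈ Icc c d, |u a y - u₀| ≤ 3 * ε) (hcd : c ≤ d)
    (hleft : ∀ s ∈ Icc a t, |u s c - u₀| ≤ 2 * ε)
    (hright : ∀ s ∈ Icc a t, |u s d - u₀| ≤ 2 * ε) :
    NearConstantBoundary (3 * ε) u₀ a t c d (unforced Φ a u) := by
  have hsmall : ∀ s ∈ Icc a t, ∀ y < 0, |unforced Φ a u s y - u s y| ≤ ε := fun s hs y hy =>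
    abs_unforced_sub_le_of_mul_lt hy (by linarith [abs_nonneg u₀]) (hΦε s hs)
  have hside : ∀ s ∈ Icc a t, ∀ y < 0, |u s y - u₀| ≤ 2 * ε → |unforced Φ a u s y - u₀| ≤ 3 * ε :=
    fun s hs y hy h => by
      linarith [abs_sub_le (unforced Φ a u s y) (u s y) u₀, hsmall s hs y hy]
  refine ⟨hta, fun s hs y hy hw => ?_, fun s hs y hy hne => ?_, fun y hy => ?_,
    fun s hs => hside s hs c (hcd.trans_lt hd) (hleft s hs),
    fun s hs => hside s hs d hd (hright s hs)⟩
  · have hs' := Ioc_subset_Icc_self hs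
    have hy0 : y < 0 := hy.2.trans hd
    refine hu.almostBurgers_unforced (mem_of_superset (Icc_mem_nhdsLE_of_mem hs) hI) hy0
      (hΦ s hs') ?_
    rw [mul_div_cancel_left₀ _ three_ne_zero]
    refine (mul_le_mul_of_nonneg_right ?_ (abs_nonneg _)).trans_lt (hΦε s hs')
    have := hsmall s hs' y hy0
    linarith [abs_sub_le (u s y) (unforced Φ a u s y) u₀, abs_sub_abs_le_abs_sub (u s y) u₀,
      abs_sub_comm (u s y) (unforced Φ a u s y)]
  · exact (continuousWithinAt_uncurry_unforced (hcont s hs y hy hne)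
      (hΦ s hs).continuousWithinAt).mono (prod_mono hI fun z hz => hz.2.trans_lt hd)
  · simpa [unforced] using hinit y hy

theorem CrossBound.abs_sub_le_side {t m z : ℝ} (hcross : CrossBound u I K t₀ x₀ ε r) (hε : 0 ≤ ε)
    (hI : Icc t₀ t ⊆ I) (ht : t ≤ t₀ + r) (hz : z ∈ Icc (x₀ - r) (x₀ + r))
    (hm : ∀ s ∈ Icc t₀ t, |u s m - u t₀ x₀| ≤ 2 * ε) (h : z = m ∨ ∃ s ∈ Icc t₀ t, (s, z) ∈ K) :
    ∀ s ∈ Icc t₀ t, |u s z - u t₀ x₀| ≤ 2 * ε := by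
  have htime : ∀ s ∈ Icc t₀ t, |s - t₀| ≤ r := fun s hs =>
    abs_le.2 ⟨by linarith [hs.1, hs.2], by linarith [hs.2]⟩
  rcases h with rfl | ⟨s, hs, hsz⟩
  · exact hm
  · exact fun s' hs' => ((hcross s (hI hs) z hsz (htime s hs) (abs_le.2
      ⟨by linarith [hz.1], by linarith [hz.2]⟩)).1 s' (hI hs') (htime s' hs')).trans (by linarith)

theorem IsForcedBurgers.abs_sub_le_of_crossBound {t x : ℝ} (hu : IsForcedBurgers φ u I)
    (hK : IsClosed K) (hp : (t₀, x₀) ∈ K)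
    (hcont : ∀ q ∈ I ×ˢ Iio 0, q ∉ K → ContinuousWithinAt (uncurry u) (I ×ˢ Iio 0) q)
    (hε : 0 < ε) (hcross : CrossBound u I K t₀ x₀ ε r) (hr : r ≤ 1) (hrx : x₀ + r < 0)
    (hI : Icc t₀ t ⊆ I) (ht : t ∈ Icc t₀ (t₀ + r)) (hx : x ∈ Icc (x₀ - r) (x₀ + r))
    (hΦ : ∀ s ∈ Icc t₀ t, HasDerivWithinAt Φ (φ s) I s)
    (hΦε : ∀ a ∈ Icc t₀ t, ∀ s ∈ Icc t₀ t, (|u t₀ x₀| + 49 * ε + 1) * |Φ s - Φ a| < ε)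
    (hleft : ∀ s ∈ Icc t₀ t, |u s (x₀ - r) - u t₀ x₀| ≤ 2 * ε)
    (hright : ∀ s ∈ Icc t₀ t, |u s (x₀ + r) - u t₀ x₀| ≤ 2 * ε) :
    |u t x - u t₀ x₀| ≤ 43 * ε := by
  have hr₀ : 0 ≤ r := by linarith [ht.1, ht.2]
  obtain ⟨a, ha, c, hc, d, hd, ⟨y, hy, hrow⟩, hcol, hcol', hcorner⟩ :=
    exists_gap_rectangle hK hp ⟨by linarith, by linarith⟩ ht.1 hx
  have hsub : Icc a t ⊆ Icc t₀ t := Icc_subset_Icc_left ha.1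
  have hboundary : NearConstantBoundary (3 * ε) (u t₀ x₀) a t c d (unforced Φ a u) := by
    refine hu.nearConstantBoundary_unforced hε (hsub.trans hI) (by linarith [ha.1, ht.2])
      (by linarith [hd.2]) (fun s hs => hΦ s (hsub hs)) (fun s hs => hΦε a ha s (hsub hs))
      (fun s hs z hz hne => hcont _ ⟨hI (hsub hs), by simp; linarith [hz.2, hd.2]⟩ fun hK => ?_)
      (fun z hz => ?_) (hc.2.trans hd.1)
      (fun s hs => hcross.abs_sub_le_side hε.le hI ht.2 ⟨hc.1, hc.2.trans hx.2⟩ hleft hcol s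
        (hsub hs))
      (fun s hs => hcross.abs_sub_le_side hε.le hI ht.2 ⟨hx.1.trans hd.1, hd.2⟩ hright hcol' s
        (hsub hs))
    · obtain ⟨rfl, h⟩ := hcorner s hs z hz hK
      exact hne.elim (lt_irrefl _) fun hne => h.elim hne.1 hne.2
    · have := (hcross a (hI ha) y hrow
        (abs_le.2 ⟨by linarith [ha.1], by linarith [ha.2, ht.2]⟩)
        (abs_le.2 ⟨by linarith [hy.1], by linarith [hy.2]⟩)).2 z
        (abs_le.2 ⟨by linarith [hc.1, hz.1], by linarith [hd.2, hz.2]⟩)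
      linarith
  have hw := hboundary.abs_sub_le (by positivity) (right_mem_Icc.2 ha.2) ⟨hc.2, hd.1⟩
  have hforce : |unforced Φ a u t x - u t x| ≤ ε :=
    abs_unforced_sub_le_of_mul_lt (by linarith [hx.2]) (by linarith [abs_nonneg (u t₀ x₀)])
      (hΦε a ha t ⟨ht.1, le_rfl⟩)
  linarith [abs_sub_le (u t x) (unforced Φ a u t x) (u t₀ x₀),
    abs_sub_comm (u t x) (unforced Φ a u t x)]

theorem eventually_forall_Icc_of_eventually {p : ℝ → Prop} (hI : I.OrdConnected) (ht₀ : t₀ ∈ I)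
    (h : ∀ᶠ s in 𝓝[I ∩ Ici t₀] t₀, p s) :
    ∀ᶠ t in 𝓝[I ∩ Ici t₀] t₀, ∀ s ∈ Icc t₀ t, p s := by
  obtain ⟨δ, hδ, hball⟩ := Metric.mem_nhdsWithin_iff.1 h
  filter_upwards [self_mem_nhdsWithin, mem_nhdsWithin_of_mem_nhds (Metric.ball_mem_nhds t₀ hδ)]
    with t ht htδ s hs
  refine hball ⟨?_, hI.out ht₀ ht.1 hs, hs.1⟩
  exact (Real.dist_eq _ _).trans_lt (abs_lt.2
    ⟨by linarith [hs.1], by linarith [hs.2, (le_abs_self (t - t₀)).trans_lt htδ]⟩)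

theorem IsForcedBurgers.continuousWithinAt_Ici {n : ℕ} (hu : IsForcedBurgers φ u I)
    (hI : I.OrdConnected) (hΦ : ∀ s ∈ I, HasDerivWithinAt Φ (φ s) I s) (ht₀ : t₀ ∈ I)
    (hx₀ : x₀ < 0) (hK : IsClosed K) (hp : (t₀, x₀) ∈ K)
    (hcont : ∀ q ∈ I ×ˢ Iio 0, q ∉ K → ContinuousWithinAt (uncurry u) (I ×ˢ Iio 0) q)
    (hlip : ∀ᶠ p in 𝓝[K ∩ I ×ˢ Iio 0] (t₀, x₀),
      LipschitzFrom n (fun s => u s p.2) I p.1 ∧ LipschitzFrom n (u p.1) (Iio 0) p.2) :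
    ContinuousWithinAt (uncurry u) ((I ∩ Ici t₀) ×ˢ Iio 0) (t₀, x₀) := by
  refine Metric.tendsto_nhds.2 fun ε' hε' => ?_
  obtain ⟨ε, hε, rfl⟩ : ∃ ε, 0 < ε ∧ ε' = 44 * ε := ⟨ε' / 44, by positivity, by ring⟩
  obtain ⟨r, hcross, hr', hr⟩ := ((eventually_crossBound hε ht₀ hx₀ hp hlip).and
    (((eventually_lt_nhds (lt_min one_pos (neg_pos.2 hx₀))).filter_mono nhdsWithin_le_nhds).and
      self_mem_nhdsWithin)).exists
  obtain ⟨hr₁, hrx⟩ := lt_min_iff.1 hr'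
  replace hr : 0 < r := hr
  have hside : ∀ y < 0, |y - x₀| ≤ r → ∀ᶠ s in 𝓝[I ∩ Ici t₀] t₀, |u s y - u t₀ x₀| ≤ 2 * ε :=
    fun y hy hyr => by
      have hbase := (hcross t₀ ht₀ x₀ hp (by simpa using hr.le) (by simpa using hr.le)).2 y hyr
      filter_upwards [((hu.differentiableWithinAt ht₀ hy).continuousWithinAt.mono
        inter_subset_left).eventually (Metric.ball_mem_nhds _ hε)] with s hs
      have hs : |u s y - u t₀ y| < ε := hs
      linarith [abs_sub_le (u s y) (u t₀ y) (u t₀ x₀)]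
  have hC : 0 < 2 * (|u t₀ x₀| + 49 * ε + 1) := by positivity
  have hΦε : ∀ᶠ s in 𝓝[I ∩ Ici t₀] t₀, |Φ s - Φ t₀| < ε / (2 * (|u t₀ x₀| + 49 * ε + 1)) :=
    ((hΦ t₀ ht₀).continuousWithinAt.mono inter_subset_left).eventually
      (Metric.ball_mem_nhds _ (div_pos hε hC))
  rw [nhdsWithin_prod_eq]
  filter_upwards [prod_mem_prod (Filter.inter_mem (eventually_forall_Icc_of_eventually hI ht₀
      ((hside (x₀ - r) (by linarith) (by simp [abs_of_pos hr])).and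
      ((hside (x₀ + r) (by linarith) (by simp [abs_of_pos hr])).and hΦε)))
    (inter_mem_nhdsWithin _ (Iic_mem_nhds (lt_add_of_pos_right t₀ hr))))
    (inter_mem_nhdsWithin _ (Icc_mem_nhds (sub_lt_self x₀ hr) (lt_add_of_pos_right x₀ hr)))]
  rintro ⟨t, x⟩ ⟨⟨hnear, ⟨htI, ht⟩, htr⟩, -, hx⟩
  have hIcc : Icc t₀ t ⊆ I := hI.out ht₀ htI
  refine lt_of_le_of_lt (hu.abs_sub_le_of_crossBound hK hp hcont hε hcross hr₁.le (by linarith) hIcc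
    ⟨ht, htr⟩ hx (fun s hs => hΦ s (hIcc hs)) (fun a ha s hs => ?_) (fun s hs => (hnear s hs).1)
    fun s hs => (hnear s hs).2.1) (by linarith)
  have hs' := (lt_div_iff₀' hC).1 (hnear s hs).2.2
  have ha' := (lt_div_iff₀' hC).1 (hnear a ha).2.2
  nlinarith [abs_sub_le (Φ s) (Φ t₀) (Φ a), abs_sub_comm (Φ a) (Φ t₀)]

theorem tendsto_neg_fst (S : Set (ℝ × ℝ)) (t x : ℝ) :
    Tendsto (Prod.map Neg.neg id) (𝓝[Prod.map Neg.neg id ⁻¹' S] (t, x)) (𝓝[S] (-t, x)) :=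
  tendsto_nhdsWithin_iff.2 ⟨tendsto_nhdsWithin_of_tendsto_nhds
    ((continuous_neg.prodMap continuous_id).tendsto _), eventually_mem_nhdsWithin⟩

theorem LipschitzFrom.neg {n : ℕ} {f : ℝ → ℝ} {t : ℝ} (h : LipschitzFrom n f I t) :
    LipschitzFrom n (fun s => -f s) I t := fun s hs hst => by
  simpa only [neg_sub_neg, abs_sub_comm] using h s hs hst

theorem LipschitzFrom.comp_neg {n : ℕ} {f : ℝ → ℝ} {t : ℝ} (h : LipschitzFrom n f I (-t)) :
    LipschitzFrom n (fun s => f (-s)) (Neg.neg ⁻¹' I) t := fun s hs hst => by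
  have hneg : |-s - -t| = |s - t| := by rw [neg_sub_neg, abs_sub_comm]
  simpa only [hneg] using h (-s) hs (hneg ▸ hst)

theorem IsForcedBurgers.continuousWithinAt_Iic {n : ℕ} (hu : IsForcedBurgers φ u I)
    (hI : I.OrdConnected) (hΦ : ∀ s ∈ I, HasDerivWithinAt Φ (φ s) I s) (ht₀ : t₀ ∈ I)
    (hx₀ : x₀ < 0) (hK : IsClosed K) (hp : (t₀, x₀) ∈ K)
    (hcont : ∀ q ∈ I ×ˢ Iio 0, q ∉ K → ContinuousWithinAt (uncurry u) (I ×ˢ Iio 0) q)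
    (hlip : ∀ᶠ p in 𝓝[K ∩ I ×ˢ Iio 0] (t₀, x₀),
      LipschitzFrom n (fun s => u s p.2) I p.1 ∧ LipschitzFrom n (u p.1) (Iio 0) p.2) :
    ContinuousWithinAt (uncurry u) ((I ∩ Iic t₀) ×ˢ Iio 0) (t₀, x₀) := by
  have hlip' := (tendsto_neg_fst (K ∩ I ×ˢ Iio 0) (-t₀) x₀).eventually ((neg_neg t₀).symm ▸ hlip)
  have h := hu.timeReversal.continuousWithinAt_Ici (Φ := fun s => -Φ (-s)) (t₀ := -t₀) (x₀ := x₀)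
    (K := Prod.map Neg.neg id ⁻¹' K) (n := n) (hI.preimage_anti fun _ _ => neg_le_neg)
    (fun s hs => hasDerivWithinAt_neg_comp_neg (hΦ _ hs)) (by simpa) hx₀
    (hK.preimage (continuous_neg.prodMap continuous_id)) (by simpa)
    (fun q hq hqK => ((hcont (Prod.map Neg.neg id q) hq hqK).tendsto.comp
      (tendsto_neg_fst _ q.1 q.2)).neg)
    (hlip'.mono fun p hp => ⟨hp.1.comp_neg.neg, hp.2.neg⟩)
  have hset : Prod.map Neg.neg id ⁻¹' ((Neg.neg ⁻¹' I ∩ Ici (-t₀)) ×ˢ Iio 0) =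
      (I ∩ Iic t₀) ×ˢ Iio (0 : ℝ) := by
    ext
    simp
  have hneg := (h.tendsto.comp (tendsto_neg_fst _ t₀ x₀)).neg
  rw [hset] at hneg
  change Tendsto (fun q : ℝ × ℝ => u q.1 q.2) _ (𝓝 (u t₀ x₀))
  simpa only [uncurry, comp_def, Prod.map, neg_neg, id] using hneg

theorem IsForcedBurgers.continuousOn (hu : IsForcedBurgers φ u I) (hI : I.OrdConnected)
    (hΦ : ∀ s ∈ I, HasDerivWithinAt Φ (φ s) I s) :
    ContinuousOn (uncurry u) (I ×ˢ Iio 0) := by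
  set D := {q ∈ I ×ˢ Iio (0 : ℝ) | ¬ContinuousWithinAt (uncurry u) (I ×ˢ Iio 0) q}
  by_contra hne
  obtain ⟨q, hq, hqD⟩ : ∃ q ∈ I ×ˢ Iio (0 : ℝ), ¬ContinuousWithinAt (uncurry u) (I ×ˢ Iio 0) q := by
    simpa only [ContinuousOn, not_forall, exists_prop] using hne
  obtain ⟨n, V, hV, ⟨p, hpV, hpD, -⟩, hlip⟩ := exists_isOpen_lipschitzFrom
    (K := closure D ∩ I ×ˢ Iio 0) (F := u)
    (isClosed_closure.isLocallyClosed.inter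
      (isLocallyClosed_prod (isLocallyClosed_of_ordConnected hI) isOpen_Iio.isLocallyClosed))
    ⟨q, subset_closure ⟨hq, hqD⟩, hq⟩ inter_subset_right
    (fun t ht x hx => hu.differentiableWithinAt ht hx)
    fun t ht x hx => (hu.differentiableAt ht hx).differentiableWithinAt
  obtain ⟨⟨t, x⟩, hV', ⟨ht, hx⟩, hdisc⟩ := mem_closure_iff.1 hpD V hV hpV
  have hcont : ∀ q ∈ I ×ˢ Iio 0, q ∉ closure D → ContinuousWithinAt (uncurry u) (I ×ˢ Iio 0) q :=
    fun q hq hqD => not_not.1 fun hne => hqD (subset_closure ⟨hq, hne⟩)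
  have hmem : (t, x) ∈ closure D := subset_closure ⟨⟨ht, hx⟩, hdisc⟩
  have hnear := eventually_nhdsWithin_iff.2
    ((hV.eventually_mem hV').mono fun p hpV hpK => hlip p ⟨hpV, hpK⟩)
  refine hdisc (((hu.continuousWithinAt_Iic hI hΦ ht hx isClosed_closure hmem hcont hnear).union
    (hu.continuousWithinAt_Ici hI hΦ ht hx isClosed_closure hmem hcont hnear)).mono ?_)
  rw [← union_prod, ← inter_union_distrib_left, Iic_union_Ici, inter_univ]

end JointContinuity

section Differentiability

variable {φ Φ : ℝ → ℝ} {u : ℝ → ℝ → ℝ} {I : Set ℝ} {t₀ x₀ : ℝ}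

theorem IsForcedBurgers.exists_foot_of_bounds {t x c d C η : ℝ} (hu : IsForcedBurgers φ u I)
    (hΦ : ∀ s ∈ I, HasDerivWithinAt Φ (φ s) I s)
    (hcont : ContinuousOn (uncurry u) (I ×ˢ Iio 0)) (hη : 0 < η) (hI : Icc t₀ t ⊆ I)
    (ht : t₀ ≤ t) (ht' : t ≤ t₀ + 1) (hd : d < 0)
    (hC : ∀ s ∈ Icc t₀ t, ∀ y ∈ Icc c d, |unforced Φ t₀ u s y| ≤ C)
    (hΦη : ∀ s ∈ Icc t₀ t, ∀ y ∈ Icc c d, (|u s y| + 1) * |Φ s - Φ t₀| < η)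
    (hx : x ∈ Icc c d) (hxc : (2 * C + 3 * η) * (t - t₀) < x - c)
    (hxd : (2 * C + 3 * η) * (t - t₀) < d - x) :
    ∃ y, |unforced Φ t₀ u t x - u t₀ y| ≤ 3 * η * (t - t₀) ∧
      |y - foot t₀ (unforced Φ t₀ u) t x| ≤ 3 * η * (t - t₀) := by
  rcases ht.eq_or_lt with rfl | hlt
  · exact ⟨x, by simp [unforced], by simp [foot]⟩
  have hηt : 0 < η * (t - t₀) := mul_pos hη (sub_pos.2 hlt)
  obtain ⟨s, hs, y, hy, hbd, hk, hfoot⟩ := exists_boundary_of_almostBurgers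
    (w := unforced Φ t₀ u) (k₁ := unforced Φ t₀ u t x - 3 * η * (t - t₀))
    (k₂ := unforced Φ t₀ u t x + 3 * η * (t - t₀))
    (y₁ := foot t₀ (unforced Φ t₀ u) t x - 3 * η * (t - t₀))
    (y₂ := foot t₀ (unforced Φ t₀ u) t x + 3 * η * (t - t₀)) hη.le ht'
    (fun s hs y hy _ => hu.almostBurgers_unforced
      (mem_of_superset (Icc_mem_nhdsLE_of_mem hs) hI) (hy.2.trans hd)
      (hΦ s (hI (Ioc_subset_Icc_self hs))) (hΦη s (Ioc_subset_Icc_self hs) y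
        (Ioo_subset_Icc_self hy)))
    (fun s hs y hy _ => (continuousWithinAt_uncurry_unforced
      (hcont _ ⟨hI hs, hy.2.trans_lt hd⟩) (hΦ s (hI hs)).continuousWithinAt).mono
        (prod_mono hI fun z hz => hz.2.trans_lt hd))
    (right_mem_Icc.2 ht) hx ⟨by linarith, by linarith⟩ ⟨by linarith, by linarith⟩
  have hspeed : ∀ s ∈ Icc t₀ t, ∀ y ∈ Icc c d,
      |(s - t₀) * unforced Φ t₀ u s y| ≤ C * (t - t₀) := fun s hs y hy => by
    rw [abs_mul, mul_comm C, abs_of_nonneg (sub_nonneg.2 hs.1)]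
    exact mul_le_mul (by linarith [hs.2]) (hC s hs y hy) (abs_nonneg _) (sub_nonneg.2 ht)
  have hys := abs_le.1 (hspeed s hs y hy)
  have hxt := abs_le.1 (hspeed t ⟨ht, le_rfl⟩ x hx)
  rw [foot, foot] at hfoot
  obtain rfl : s = t₀ := by
    rcases hbd with h | rfl | rfl
    · exact h
    · linarith [hfoot.1]
    · linarith [hfoot.2]
  simp only [unforced, foot, sub_self, mul_zero, add_zero, zero_mul, sub_zero] at hk hfoot ⊢
  exact ⟨y, abs_le.2 ⟨by linarith [hk.2], by linarith [hk.1]⟩,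
    abs_le.2 ⟨by linarith [hfoot.1], by linarith [hfoot.2]⟩⟩

theorem exists_forall_abs_lt_of_continuousWithinAt
    (hcont : ContinuousWithinAt (uncurry u) (I ×ˢ Iio 0) (t₀, x₀)) (hx₀ : x₀ < 0) :
    ∃ ρ > 0, x₀ + ρ < 0 ∧ ∀ s ∈ I, |s - t₀| ≤ ρ → ∀ y ∈ Icc (x₀ - ρ) (x₀ + ρ),
      |u s y| < |u t₀ x₀| + 1 := by
  obtain ⟨δ, hδ, hball⟩ := Metric.mem_nhdsWithin_iff.1
    (hcont.eventually (Metric.ball_mem_nhds _ one_pos))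
  obtain ⟨ρ, hρ, hρδ⟩ := exists_between (lt_min hδ (neg_pos.2 hx₀))
  obtain ⟨hρδ, hρx⟩ := lt_min_iff.1 hρδ
  refine ⟨ρ, hρ, by linarith, fun s hs hsρ y hy => ?_⟩
  have hyρ : |y - x₀| ≤ ρ := abs_le.2 ⟨by linarith [hy.1], by linarith [hy.2]⟩
  have hnear : |u s y - u t₀ x₀| < 1 := hball (a := (s, y))
    ⟨max_lt (hsρ.trans_lt hρδ) (hyρ.trans_lt hρδ), hs, hy.2.trans_lt (by linarith)⟩
  linarith [abs_sub_abs_le_abs_sub (u s y) (u t₀ x₀)]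

/- Approximate transport: up to `O(η (t - t₀))`, the value at `(t, x)` is the value at the foot. -/
theorem IsForcedBurgers.eventually_exists_foot {η : ℝ} (hu : IsForcedBurgers φ u I)
    (hI : I.OrdConnected) (hΦ : ∀ s ∈ I, HasDerivWithinAt Φ (φ s) I s)
    (hcont : ContinuousOn (uncurry u) (I ×ˢ Iio 0)) (hη : 0 < η) (ht₀ : t₀ ∈ I) (hx₀ : x₀ < 0) :
    ∀ᶠ q in 𝓝[(I ∩ Ici t₀) ×ˢ Iio 0] (t₀, x₀), ∃ y,
      |unforced Φ t₀ u q.1 q.2 - u t₀ y| ≤ 3 * η * (q.1 - t₀) ∧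
        |y - foot t₀ (unforced Φ t₀ u) q.1 q.2| ≤ 3 * η * (q.1 - t₀) := by
  obtain ⟨ρ, hρ, hρx, hu₀⟩ :=
    exists_forall_abs_lt_of_continuousWithinAt (hcont (t₀, x₀) ⟨ht₀, hx₀⟩) hx₀
  have hΦ₀ : ∀ᶠ s in 𝓝[I ∩ Ici t₀] t₀, (|u t₀ x₀| + 2) * |Φ s - Φ t₀| < min η 1 := by
    have hlim : ContinuousWithinAt (fun s => (|u t₀ x₀| + 2) * |Φ s - Φ t₀|) (I ∩ Ici t₀) t₀ :=
      (((hΦ t₀ ht₀).continuousWithinAt.sub continuousWithinAt_const).abs.const_mul _).mono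
        inter_subset_left
    exact hlim.eventually_lt_const (by simpa using lt_min hη one_pos)
  have hshort : ∀ᶠ t in 𝓝 t₀, (2 * (|u t₀ x₀| + 2) + 3 * η) * (t - t₀) < ρ / 2 :=
    (Continuous.tendsto' (by fun_prop) _ _ (by simp)).eventually_lt_const (half_pos hρ)
  rw [nhdsWithin_prod_eq]
  filter_upwards [prod_mem_prod (Filter.inter_mem (eventually_forall_Icc_of_eventually hI ht₀ hΦ₀)
      (inter_mem_nhdsWithin _ (Filter.inter_mem hshort
        (Iio_mem_nhds (lt_add_of_pos_right t₀ (lt_min hρ one_pos))))))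
    (mem_nhdsWithin_of_mem_nhds (Ioo_mem_nhds (sub_lt_self x₀ (half_pos hρ))
      (lt_add_of_pos_right x₀ (half_pos hρ))))]
  rintro ⟨t, x⟩ ⟨⟨hΦη, ⟨htI, ht⟩, hts, htρ⟩, hxl, hxr⟩
  have hIcc := hI.out ht₀ htI
  have htρ : t - t₀ < min ρ 1 := by linarith [mem_Iio.1 htρ]
  obtain ⟨htρ, ht₁⟩ := lt_min_iff.1 htρ
  have hs : ∀ s ∈ Icc t₀ t, |s - t₀| ≤ ρ := fun s hs =>
    abs_le.2 ⟨by linarith [hs.1], by linarith [hs.2]⟩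
  have hts : (2 * (|u t₀ x₀| + 2) + 3 * η) * (t - t₀) < ρ / 2 := hts
  refine hu.exists_foot_of_bounds hΦ hcont hη hIcc ht (by linarith) (by linarith)
    (c := x₀ - ρ) (d := x₀ + ρ) (C := |u t₀ x₀| + 2) (fun s hst y hy => ?_)
    (fun s hst y hy => ?_) ⟨by linarith, by linarith⟩ (by linarith) (by linarith)
  · have hw := abs_unforced_sub_le_of_mul_lt (u := u) (x := y) (by linarith [hy.2])
      (by linarith [abs_nonneg (u t₀ x₀)]) ((hΦη s hst).trans_le (min_le_right _ _))
    linarith [abs_sub_abs_le_abs_sub (unforced Φ t₀ u s y) (u s y),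
      hu₀ s (hIcc hst) (hs s hst) y hy]
  · refine (mul_le_mul_of_nonneg_right ?_ (abs_nonneg _)).trans_lt
      ((hΦη s hst).trans_le (min_le_left _ _))
    linarith [hu₀ s (hIcc hst) (hs s hst) y hy]

theorem abs_foot_sub_le {k h x y w η n : ℝ} (hη : 0 ≤ η) (hη₁ : η ≤ 1) (hh : |h| ≤ n)
    (hx : |x - x₀| ≤ n) (hw : |w - k| ≤ η) (hy : |y - (x - h * w)| ≤ 3 * η * h) :
    |y - x₀| ≤ (|k| + 5) * n := by
  have hn : 0 ≤ n := (abs_nonneg h).trans hh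
  have hηn : η * n ≤ n := mul_le_of_le_one_left hn hη₁
  have hηh : η * h ≤ η * n := by gcongr; exact (le_abs_self h).trans hh
  have hhw : |h * (w - k)| ≤ n * η := by rw [abs_mul]; gcongr
  have hhk : |h * k| ≤ n * |k| := by rw [abs_mul]; gcongr
  calc |y - x₀| = |((y - (x - h * w)) + (x - x₀)) - (h * (w - k) + h * k)| := by ring_nf
    _ ≤ (|y - (x - h * w)| + |x - x₀|) + (|h * (w - k)| + |h * k|) :=
      (abs_sub _ _).trans (add_le_add (abs_add_le _ _) (abs_add_le _ _))
    _ ≤ (|k| + 5) * n := by linarith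

theorem abs_sub_le_of_foot {f : ℝ → ℝ} {p h x y w η n : ℝ} (hη : 0 ≤ η) (hη₁ : η ≤ 1)
    (hfy : |f y - f x₀ - p * (y - x₀)| ≤ η * |y - x₀|) (hh : |h| ≤ n) (hx : |x - x₀| ≤ n)
    (hw₀ : |w - f x₀| ≤ η) (hw : |w - f y| ≤ 3 * η * h) (hy : |y - (x - h * w)| ≤ 3 * η * h) :
    |w - f x₀ - p * (x - x₀ - f x₀ * h)| ≤ η * (|f x₀| + 8 + 4 * |p|) * n := by
  have hn : 0 ≤ n := (abs_nonneg h).trans hh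
  have hηh : η * h ≤ η * n := by gcongr; exact (le_abs_self h).trans hh
  have hhw : |h * (w - f x₀)| ≤ n * η := by rw [abs_mul]; gcongr
  have hp : |p * ((y - (x - h * w)) - h * (w - f x₀))| ≤ |p| * (4 * (η * n)) := by
    rw [abs_mul]
    gcongr
    exact (abs_sub _ _).trans (by linarith)
  calc |w - f x₀ - p * (x - x₀ - f x₀ * h)|
      = |((w - f y) + (f y - f x₀ - p * (y - x₀)))
          + p * ((y - (x - h * w)) - h * (w - f x₀))| := by ring_nf
    _ ≤ (|w - f y| + |f y - f x₀ - p * (y - x₀)|)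
          + |p * ((y - (x - h * w)) - h * (w - f x₀))| :=
        (abs_add_le _ _).trans (add_le_add_left (abs_add_le _ _) _)
    _ ≤ (3 * (η * n) + η * ((|f x₀| + 5) * n)) + |p| * (4 * (η * n)) := by
        gcongr
        · linarith
        · exact hfy.trans (by gcongr; exact abs_foot_sub_le hη hη₁ hh hx hw₀ hy)
    _ = η * (|f x₀| + 8 + 4 * |p|) * n := by ring

theorem hasFDerivWithinAt_uncurry_of_foot {w : ℝ → ℝ → ℝ} {f : ℝ → ℝ} {p : ℝ} {S : Set (ℝ × ℝ)}
    (hf : HasDerivAt f p x₀) (hw : ContinuousWithinAt (uncurry w) S (t₀, x₀))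
    (hw₀ : w t₀ x₀ = f x₀)
    (hfoot : ∀ η > 0, ∀ᶠ q in 𝓝[S] (t₀, x₀), ∃ y, |w q.1 q.2 - f y| ≤ 3 * η * (q.1 - t₀) ∧
      |y - foot t₀ w q.1 q.2| ≤ 3 * η * (q.1 - t₀)) :
    HasFDerivWithinAt (uncurry w)
      (p • (ContinuousLinearMap.snd ℝ ℝ ℝ - f x₀ • ContinuousLinearMap.fst ℝ ℝ ℝ)) S (t₀, x₀) := by
  refine .of_isLittleO (Asymptotics.isLittleO_iff.2 fun c hc => ?_)
  set C := |f x₀| + 8 + 4 * |p|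
  have hC₀ : 0 < C := by positivity
  obtain ⟨η, hη, hηc⟩ := exists_between (lt_min one_pos (div_pos hc hC₀))
  obtain ⟨hη₁, hηc⟩ := lt_min_iff.1 hηc
  obtain ⟨δ, hδ, hball⟩ := Metric.eventually_nhds_iff.1
    ((Asymptotics.isLittleO_iff.1 hf.isLittleO) hη)
  have hnear : ∀ᶠ q in 𝓝[S] (t₀, x₀), (|f x₀| + 5) * ‖q - (t₀, x₀)‖ < δ :=
    ((Continuous.tendsto' (by fun_prop) _ _ (by simp)).mono_left nhdsWithin_le_nhds
      ).eventually_lt_const hδ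
  filter_upwards [hfoot η hη, hnear, hw.eventually (Metric.ball_mem_nhds _ hη)]
    with ⟨t, x⟩ ⟨y, hwy, hy⟩ hqδ hqw
  have ht : |t - t₀| ≤ ‖(t, x) - (t₀, x₀)‖ := norm_fst_le ((t, x) - (t₀, x₀))
  have hx : |x - x₀| ≤ ‖(t, x) - (t₀, x₀)‖ := norm_snd_le ((t, x) - (t₀, x₀))
  have hqw : |w t x - f x₀| ≤ η := hw₀ ▸ (show |w t x - w t₀ x₀| < η from hqw).le
  have hfy := hball ((abs_foot_sub_le hη.le hη₁.le ht hx hqw hy).trans_lt hqδ)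
  have key := abs_sub_le_of_foot hη.le hη₁.le (p := p) (by simpa [mul_comm p] using hfy) ht hx hqw
    hwy hy
  simpa [uncurry, hw₀] using key.trans
    (mul_le_mul_of_nonneg_right ((lt_div_iff₀ hC₀).1 hηc).le (norm_nonneg _))

/-- The total derivative at `(t, x)` which the forced Burgers equation prescribes for a solution. -/
noncomputable def forcedBurgersFDeriv (φ : ℝ → ℝ) (u : ℝ → ℝ → ℝ) (t x : ℝ) : ℝ × ℝ →L[ℝ] ℝ :=
  deriv (u t) x • (ContinuousLinearMap.snd ℝ ℝ ℝ - u t x • ContinuousLinearMap.fst ℝ ℝ ℝ) -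
    (Real.exp x * φ t) • ContinuousLinearMap.fst ℝ ℝ ℝ

theorem IsForcedBurgers.hasFDerivWithinAt_Ici (hu : IsForcedBurgers φ u I)
    (hI : I.OrdConnected) (hΦ : ∀ s ∈ I, HasDerivWithinAt Φ (φ s) I s)
    (hcont : ContinuousOn (uncurry u) (I ×ˢ Iio 0)) (ht₀ : t₀ ∈ I) (hx₀ : x₀ < 0) :
    HasFDerivWithinAt (uncurry u) (forcedBurgersFDeriv φ u t₀ x₀) ((I ∩ Ici t₀) ×ˢ Iio 0)
      (t₀, x₀) := by
  have hw := hasFDerivWithinAt_uncurry_of_foot (w := unforced Φ t₀ u)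
    (hu.differentiableAt ht₀ hx₀).hasDerivAt
    ((continuousWithinAt_uncurry_unforced (hcont _ ⟨ht₀, hx₀⟩)
      (hΦ t₀ ht₀).continuousWithinAt).mono (prod_mono_left inter_subset_left)) (by simp [unforced])
    fun η hη => hu.eventually_exists_foot hI hΦ hcont hη ht₀ hx₀
  have hexp : HasFDerivWithinAt (fun q : ℝ × ℝ => Real.exp q.2) (Real.exp x₀ •
      ContinuousLinearMap.snd ℝ ℝ ℝ) ((I ∩ Ici t₀) ×ˢ Iio 0) (t₀, x₀) :=
    (Real.hasDerivAt_exp x₀).comp_hasFDerivWithinAt (f := Prod.snd) (t₀, x₀) hasFDerivWithinAt_snd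
  have hΦ' : HasFDerivWithinAt (fun q : ℝ × ℝ => Φ q.1 - Φ t₀)
      (φ t₀ • ContinuousLinearMap.fst ℝ ℝ ℝ) ((I ∩ Ici t₀) ×ˢ Iio 0) (t₀, x₀) :=
    (((hΦ t₀ ht₀).comp_hasFDerivWithinAt (t₀, x₀) hasFDerivWithinAt_fst
      fun q hq => hq.1.1).sub_const _)
  refine ((hw.sub (hexp.mul hΦ')).congr_fderiv ?_).congr (fun q _ => ?_) ?_
  · ext <;> simp [forcedBurgersFDeriv]
  · simp [uncurry, unforced]
  · simp [uncurry, unforced]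

theorem IsForcedBurgers.hasFDerivWithinAt_Iic (hu : IsForcedBurgers φ u I)
    (hI : I.OrdConnected) (hΦ : ∀ s ∈ I, HasDerivWithinAt Φ (φ s) I s)
    (hcont : ContinuousOn (uncurry u) (I ×ˢ Iio 0)) (ht₀ : t₀ ∈ I) (hx₀ : x₀ < 0) :
    HasFDerivWithinAt (uncurry u) (forcedBurgersFDeriv φ u t₀ x₀) ((I ∩ Iic t₀) ×ˢ Iio 0)
      (t₀, x₀) := by
  have h := hu.timeReversal.hasFDerivWithinAt_Ici (Φ := fun s => -Φ (-s)) (t₀ := -t₀) (x₀ := x₀)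
    (hI.preimage_anti fun _ _ => neg_le_neg)
    (fun s hs => hasDerivWithinAt_neg_comp_neg (hΦ _ hs))
    (hcont.comp (f := Prod.map Neg.neg id) (by fun_prop) fun q hq => hq).neg (by simpa) hx₀
  have hreflect : HasFDerivWithinAt (Prod.map Neg.neg id : ℝ × ℝ → ℝ × ℝ)
      ((-ContinuousLinearMap.fst ℝ ℝ ℝ).prod (ContinuousLinearMap.snd ℝ ℝ ℝ))
      ((I ∩ Iic t₀) ×ˢ Iio 0) (t₀, x₀) :=
    hasFDerivWithinAt_fst.neg.prodMk hasFDerivWithinAt_snd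
  refine ((h.comp (t₀, x₀) hreflect ?_).neg.congr_fderiv ?_).congr (fun q _ => ?_) ?_
  · exact fun q hq => ⟨⟨by simpa using hq.1.1, neg_le_neg (mem_Iic.1 hq.1.2)⟩, hq.2⟩
  · ext <;> simp [forcedBurgersFDeriv, add_comm, sub_eq_add_neg]
  · simp [uncurry]
  · simp [uncurry]

theorem IsForcedBurgers.hasFDerivWithinAt (hu : IsForcedBurgers φ u I) (hI : I.OrdConnected)
    (hΦ : ∀ s ∈ I, HasDerivWithinAt Φ (φ s) I s) (ht₀ : t₀ ∈ I) (hx₀ : x₀ < 0) :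
    HasFDerivWithinAt (uncurry u) (forcedBurgersFDeriv φ u t₀ x₀) (I ×ˢ Iio 0) (t₀, x₀) := by
  have hcont := hu.continuousOn hI hΦ
  refine ((hu.hasFDerivWithinAt_Iic hI hΦ hcont ht₀ hx₀).union
    (hu.hasFDerivWithinAt_Ici hI hΦ hcont ht₀ hx₀)).mono ?_
  rw [← union_prod, ← inter_union_distrib_left, Iic_union_Ici, inter_univ]

end Differentiability

section MassBalance

variable {φ Φ : ℝ → ℝ} {u : ℝ → ℝ → ℝ} {I : Set ℝ} {a b t t₀ : ℝ} {n : ℕ}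

theorem exists_Icc_mem_nhdsWithin_of_ordConnected {α : Type*} [LinearOrder α] [TopologicalSpace α]
    [OrderTopology α] {I : Set α} {t : α} (hI : I.OrdConnected) (ht : t ∈ I) :
    ∃ c d, t ∈ Icc c d ∧ Icc c d ∈ 𝓝[I] t ∧ Icc c d ⊆ I := by
  obtain ⟨c, d, htcd, hnhds, -⟩ := exists_Icc_mem_subset_of_mem_nhds (a := (⟨t, ht⟩ : I)) univ_mem
  refine ⟨c, d, htcd, ?_, hI.out c.2 d.2⟩
  rw [nhdsWithin_eq_map_subtype_coe ht, ← image_subtype_val_Icc c d]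
  exact image_mem_map hnhds

theorem hasDerivWithinAt_integral_of_continuousOn {q : ℝ → ℝ} (hI : I.OrdConnected)
    (hq : ContinuousOn q I) (ht₀ : t₀ ∈ I) (ht : t ∈ I) :
    HasDerivWithinAt (fun s => ∫ r in t₀..s, q r) (q t) I t := by
  obtain ⟨c, d, htcd, hnhds, hcd⟩ := exists_Icc_mem_nhdsWithin_of_ordConnected hI ht
  have : Fact (t ∈ Icc c d) := ⟨htcd⟩
  exact (intervalIntegral.integral_hasDerivWithinAt_right
    (hq.mono (hI.uIcc_subset ht₀ ht)).intervalIntegrable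
    ((hq.mono hcd).stronglyMeasurableAtFilter_nhdsWithin measurableSet_Icc t)
    ((hq.mono hcd) t htcd)).mono_of_mem_nhdsWithin hnhds

theorem LipschitzFrom.abs_slope_le {f : ℝ → ℝ} {r s : ℝ} (hf : LipschitzFrom n f I s) (hr : r ∈ I)
    (hrs : |r - s| < 1 / (n + 1)) : |slope f s r| ≤ n := by
  rw [slope_def_field, abs_div]
  exact div_le_of_le_mul₀ (abs_nonneg _) n.cast_nonneg (hf r hr hrs)

theorem LipschitzFrom.abs_deriv_le {f : ℝ → ℝ} {f' s : ℝ} [(𝓝[I \ {s}] s).NeBot]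
    (hf : LipschitzFrom n f I s) (hf' : HasDerivWithinAt f f' I s) : |f'| ≤ n := by
  refine le_of_tendsto (hasDerivWithinAt_iff_tendsto_slope.1 hf').abs ?_
  filter_upwards [self_mem_nhdsWithin,
    nhdsWithin_le_nhds (Metric.ball_mem_nhds s (Nat.one_div_pos_of_nat (n := n)))] with r hr hrs
  exact hf.abs_slope_le hr.1 hrs

theorem hasDerivWithinAt_integral_of_lipschitzFrom {F : ℝ → ℝ → ℝ} {F' : ℝ → ℝ} (ht : t ∈ I)
    (hint : ∀ s ∈ I, IntervalIntegrable (F s) MeasureTheory.volume a b)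
    (hF : ∀ x ∈ uIcc a b, HasDerivWithinAt (fun s => F s x) (F' x) I t)
    (hlip : ∀ x ∈ uIcc a b, LipschitzFrom n (fun s => F s x) I t) :
    HasDerivWithinAt (fun s => ∫ x in a..b, F s x) (∫ x in a..b, F' x) I t := by
  have hslope : ∀ s ∈ I, IntervalIntegrable (fun x => slope (fun r => F r x) t s)
      MeasureTheory.volume a b := fun s hs => by
    simpa only [slope_def_field] using ((hint s hs).sub (hint t ht)).div_const (s - t)
  have hI : ∀ᶠ s in 𝓝[I \ {t}] t, s ∈ I :=
    eventually_mem_nhdsWithin.mono fun s hs => hs.1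
  have hclose : ∀ᶠ s in 𝓝[I \ {t}] t, |s - t| < 1 / (n + 1) :=
    nhdsWithin_le_nhds (Metric.ball_mem_nhds t Nat.one_div_pos_of_nat)
  rw [hasDerivWithinAt_iff_tendsto_slope]
  refine (intervalIntegral.tendsto_integral_filter_of_dominated_convergence (fun _ => (n : ℝ))
    (hI.mono fun s hs => (intervalIntegrable_iff.1 (hslope s hs)).aestronglyMeasurable) ?_
    intervalIntegrable_const (Eventually.of_forall fun x hx =>
      hasDerivWithinAt_iff_tendsto_slope.1 (hF x (uIoc_subset_uIcc hx)))).congr' ?_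
  · filter_upwards [hI, hclose] with s hs hst
    exact Eventually.of_forall fun x hx => (hlip x (uIoc_subset_uIcc hx)).abs_slope_le hs hst
  · filter_upwards [hI] with s hs
    simp only [slope_def_field, intervalIntegral.integral_div,
      intervalIntegral.integral_sub (hint s hs) (hint t ht)]

/-- The prescribed rate of change of `∫ x in a..b, u t x` for a solution of the forced Burgers
equation: flux through the endpoints plus forcing. -/
noncomputable def massRate (φ : ℝ → ℝ) (u : ℝ → ℝ → ℝ) (a b t : ℝ) : ℝ :=
  -((u t b ^ 2 - u t a ^ 2) / 2) - φ t * (Real.exp b - Real.exp a)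

theorem IsForcedBurgers.intervalIntegrable (hu : IsForcedBurgers φ u I) (ha : a < 0) (hb : b < 0)
    (ht : t ∈ I) : IntervalIntegrable (u t) MeasureTheory.volume a b :=
  ContinuousOn.intervalIntegrable fun _ hx =>
    (hu.differentiableAt ht (hx.2.trans_lt (max_lt ha hb))).continuousAt.continuousWithinAt

theorem IsForcedBurgers.hasDerivWithinAt_integral_of_lipschitzFrom (hu : IsForcedBurgers φ u I)
    (ha : a < 0) (hb : b < 0) (ht : t ∈ I)
    (hlip : ∀ x ∈ uIcc a b, LipschitzFrom n (fun s => u s x) I t) :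
    HasDerivWithinAt (fun s => ∫ x in a..b, u s x) (massRate φ u a b t) I t := by
  rcases eq_or_neBot (𝓝[I \ {t}] t) with hbot | hne
  · simp [hasDerivWithinAt_iff_tendsto_slope, hbot]
  set G : ℝ → ℝ := fun x => -(u t x ^ 2 / 2) - φ t * Real.exp x
  have hderiv : ∀ x ∈ uIcc a b, HasDerivAt G (deriv G x) x ∧
      HasDerivWithinAt (fun s => u s x) (deriv G x) I t := fun x hx => by
    obtain ⟨ux, hux, hut⟩ := hu t ht x (hx.2.trans_lt (max_lt ha hb))
    have hG : HasDerivAt G (-(u t x * ux) - Real.exp x * φ t) x :=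
      (((hux.fun_pow 2).div_const 2).neg.sub ((Real.hasDerivAt_exp x).const_mul (φ t))).congr_deriv
        (by push_cast; ring)
    exact hG.deriv ▸ ⟨hG, hut⟩
  have hbound : ∀ x ∈ uIcc a b, ‖deriv G x‖ ≤ n := fun x hx =>
    (hlip x hx).abs_deriv_le (hderiv x hx).2
  have hint : IntervalIntegrable (deriv G) MeasureTheory.volume a b :=
    intervalIntegrable_const.mono_fun (measurable_deriv G).aestronglyMeasurable
      ((MeasureTheory.ae_restrict_iff' measurableSet_uIoc).2 (Eventually.of_forall fun x hx => by
        simpa using hbound x (uIoc_subset_uIcc hx)) : ∀ᵐ x ∂_, ‖deriv G x‖ ≤ ‖(n : ℝ)‖)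
  refine (_root_.hasDerivWithinAt_integral_of_lipschitzFrom ht
    (fun s hs => hu.intervalIntegrable ha hb hs) (fun x hx => (hderiv x hx).2) hlip).congr_deriv ?_
  rw [intervalIntegral.integral_eq_sub_of_hasDerivAt (fun x hx => (hderiv x hx).1) hint]
  simp only [G, massRate]
  ring

theorem IsForcedBurgers.hasFDerivAt (hu : IsForcedBurgers φ u I) (hI : I.OrdConnected)
    (hΦ : ∀ s ∈ I, HasDerivWithinAt Φ (φ s) I s) {x : ℝ} (ht : I ∈ 𝓝 t) (hx : x < 0) :
    HasFDerivAt (uncurry u) (forcedBurgersFDeriv φ u t x) (t, x) :=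
  (hu.hasFDerivWithinAt hI hΦ (mem_of_mem_nhds ht) hx).hasFDerivAt
    (prod_mem_nhds ht (Iio_mem_nhds hx))

/- This is the divergence theorem for the field `(u + eˣ Φ(t), u² / 2)`, whose divergence is
zero. -/
theorem IsForcedBurgers.integral_flux_add_integral (hu : IsForcedBurgers φ u I)
    (hI : I.OrdConnected) (hΦ : ∀ s ∈ I, HasDerivWithinAt Φ (φ s) I s) (ha : a < 0) (hb : b < 0)
    (ht₀ : t₀ ∈ I) (ht : t ∈ I) :
    (∫ s in t₀..t, u s b ^ 2 / 2) - (∫ s in t₀..t, u s a ^ 2 / 2) +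
      (∫ x in a..b, u t x + Real.exp x * Φ t) - ∫ x in a..b, u t₀ x + Real.exp x * Φ t₀ = 0 := by
  have hsub : uIcc t₀ t ⊆ I := hI.uIcc_subset ht₀ ht
  have hcont : ContinuousOn (uncurry u) (uIcc t₀ t ×ˢ uIcc a b) := (hu.continuousOn hI hΦ).mono
    (prod_mono hsub fun x hx => hx.2.trans_lt (max_lt ha hb))
  have hΦc : ContinuousOn Φ (uIcc t₀ t) := fun s hs =>
    (hΦ s (hsub hs)).continuousWithinAt.mono hsub
  have hderiv : ∀ p ∈ Ioo (min t₀ t) (max t₀ t) ×ˢ Ioo (min a b) (max a b) \ ∅,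
      HasFDerivAt (uncurry u) (forcedBurgersFDeriv φ u p.1 p.2) p ∧ HasDerivAt Φ (φ p.1) p.1 := by
    rintro ⟨s, x⟩ ⟨⟨hs, hx⟩, -⟩
    have hsI : I ∈ 𝓝 s := mem_of_superset (Ioo_mem_nhds hs.1 hs.2) (Ioo_subset_Icc_self.trans hsub)
    exact ⟨hu.hasFDerivAt hI hΦ hsI (hx.2.trans (max_lt ha hb)),
      (hΦ s (mem_of_mem_nhds hsI)).hasDerivAt hsI⟩
  have hzero : ∀ s x : ℝ, -(deriv (u s) x * u s x) + u s x * deriv (u s) x = 0 := fun s x => by ring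
  have hdiv := MeasureTheory.integral2_divergence_prod_of_hasFDerivAt_off_countable
    (fun p => uncurry u p + Real.exp p.2 * Φ p.1) (fun p => uncurry u p ^ 2 / 2)
    (fun p => forcedBurgersFDeriv φ u p.1 p.2 +
      (Real.exp p.2 • φ p.1 • ContinuousLinearMap.fst ℝ ℝ ℝ +
        Φ p.1 • Real.exp p.2 • ContinuousLinearMap.snd ℝ ℝ ℝ))
    (fun p => u p.1 p.2 • forcedBurgersFDeriv φ u p.1 p.2) t₀ a t b ∅ countable_empty
    (hcont.add ((Real.continuous_exp.comp continuous_snd).continuousOn.mul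
      (hΦc.comp continuousOn_fst fun p hp => hp.1)))
    ((hcont.pow 2).div_const 2)
    (fun p hp => (hderiv p hp).1.add (((Real.hasDerivAt_exp p.2).comp_hasFDerivAt p
      hasFDerivAt_snd).mul ((hderiv p hp).2.comp_hasFDerivAt p hasFDerivAt_fst)))
    (fun p hp => (((hasDerivAt_pow 2 _).div_const 2).congr_deriv (by simp [uncurry])
      ).comp_hasFDerivAt p (hderiv p hp).1)
    (by simp [forcedBurgersFDeriv, hzero])
  simpa [forcedBurgersFDeriv, hzero] using hdiv.symm

theorem IsForcedBurgers.integral_sub_integral (hu : IsForcedBurgers φ u I) (hI : I.OrdConnected)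
    (hΦ : ∀ s ∈ I, HasDerivWithinAt Φ (φ s) I s) (ha : a < 0) (hb : b < 0) (ht₀ : t₀ ∈ I)
    (ht : t ∈ I) :
    ∫ x in a..b, u t x = (∫ x in a..b, u t₀ x) - (∫ s in t₀..t, u s b ^ 2 / 2) +
      (∫ s in t₀..t, u s a ^ 2 / 2) - (Φ t - Φ t₀) * (Real.exp b - Real.exp a) := by
  have hsplit : ∀ s ∈ I, ∫ x in a..b, u s x + Real.exp x * Φ s =
      (∫ x in a..b, u s x) + (Real.exp b - Real.exp a) * Φ s := fun s hs => by
    rw [intervalIntegral.integral_add (hu.intervalIntegrable ha hb hs)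
      (Continuous.intervalIntegrable (by fun_prop) a b), intervalIntegral.integral_mul_const,
      integral_exp]
  have hflux := hu.integral_flux_add_integral hI hΦ ha hb ht₀ ht
  rw [hsplit t ht, hsplit t₀ ht₀] at hflux
  linarith

theorem IsForcedBurgers.hasDerivWithinAt_integral_of_primitive (hu : IsForcedBurgers φ u I)
    (hI : I.OrdConnected) (hΦ : ∀ s ∈ I, HasDerivWithinAt Φ (φ s) I s) (ha : a < 0) (hb : b < 0)
    (ht : t ∈ I) :
    HasDerivWithinAt (fun s => ∫ x in a..b, u s x) (massRate φ u a b t) I t := by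
  have hflux : ∀ x < 0, HasDerivWithinAt (fun s => ∫ r in t..s, u r x ^ 2 / 2) (u t x ^ 2 / 2) I
      t := fun x hx => hasDerivWithinAt_integral_of_continuousOn hI (fun s hs =>
      ((hu.differentiableWithinAt hs hx).continuousWithinAt.pow 2).div_const 2) ht ht
  exact (((((hflux b hb).const_sub _).add (hflux a ha)).sub (((hΦ t ht).sub_const _).mul_const _)
    ).congr_deriv (by rw [massRate]; ring)).congr_of_mem
    (fun s hs => hu.integral_sub_integral hI hΦ ha hb ht hs) ht

end MassBalance

section Primitive

variable {φ : ℝ → ℝ} {u : ℝ → ℝ → ℝ} {I : Set ℝ} {a b t t₀ : ℝ}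

/-- `φ` has a primitive on a neighbourhood of `t` in `I`. -/
def HasLocalPrimitive (φ : ℝ → ℝ) (I : Set ℝ) (t : ℝ) : Prop :=
  ∃ Φ, ∀ᶠ s in 𝓝[I] t, HasDerivWithinAt Φ (φ s) I s

theorem isOpen_setOf_hasLocalPrimitive : IsOpen {t | HasLocalPrimitive φ I t} :=
  isOpen_iff_eventually.2 fun _ ⟨Φ, hΦ⟩ =>
    (eventually_nhds_nhdsWithin.2 hΦ).mono fun _ hs => ⟨Φ, hs⟩

theorem HasLocalPrimitive.exists_ordConnected (h : HasLocalPrimitive φ I t)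
    (hI : I.OrdConnected) : ∃ J ⊆ I, ∃ Φ, J.OrdConnected ∧ J ∈ 𝓝[I] t ∧
      ∀ s ∈ J, HasDerivWithinAt Φ (φ s) J s := by
  obtain ⟨Φ, hΦ⟩ := h
  obtain ⟨r, hr, hball⟩ := Metric.mem_nhdsWithin_iff.1 hΦ
  refine ⟨I ∩ Metric.ball t r, inter_subset_left, Φ, hI.inter ?_,
    inter_mem_nhdsWithin _ (Metric.ball_mem_nhds t hr),
    fun s hs => (hball ⟨hs.2, hs.1⟩).mono inter_subset_left⟩
  rw [Real.ball_eq_Ioo]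
  exact ordConnected_Ioo

theorem IsForcedBurgers.hasDerivWithinAt_integral_of_hasLocalPrimitive
    (hu : IsForcedBurgers φ u I) (hI : I.OrdConnected) (h : HasLocalPrimitive φ I t) (ha : a < 0)
    (hb : b < 0) (ht : t ∈ I) :
    HasDerivWithinAt (fun s => ∫ x in a..b, u s x) (massRate φ u a b t) I t := by
  obtain ⟨J, hJI, Φ, hJ, hJt, hΦ⟩ := h.exists_ordConnected hI
  exact ((hu.mono hJI).hasDerivWithinAt_integral_of_primitive hJ hΦ ha hb
    (mem_of_mem_nhdsWithin ht hJt)).mono_of_mem_nhdsWithin hJt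

/- The mass balance, solved for the forcing, exhibits a primitive of `φ`. -/
theorem IsForcedBurgers.hasLocalPrimitive_of_hasDerivWithinAt_integral
    (hu : IsForcedBurgers φ u I) (hI : I.OrdConnected) (hab : a < b) (hb : b < 0) (ht₀ : t₀ ∈ I)
    (h : ∀ᶠ t in 𝓝[I] t₀,
      HasDerivWithinAt (fun s => ∫ x in a..b, u s x) (massRate φ u a b t) I t) :
    HasLocalPrimitive φ I t₀ := by
  have hflux : ContinuousOn (fun s => (u s b ^ 2 - u s a ^ 2) / 2) I := fun s hs =>
    (((hu.differentiableWithinAt hs hb).continuousWithinAt.pow 2).sub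
      ((hu.differentiableWithinAt hs (hab.trans hb)).continuousWithinAt.pow 2)).div_const 2
  have hexp : Real.exp b - Real.exp a ≠ 0 := (sub_pos.2 (Real.exp_lt_exp.2 hab)).ne'
  refine ⟨fun t => -((∫ x in a..b, u t x) + ∫ s in t₀..t, (u s b ^ 2 - u s a ^ 2) / 2) /
    (Real.exp b - Real.exp a), ?_⟩
  filter_upwards [h, self_mem_nhdsWithin] with t hmass ht
  refine ((hmass.add (hasDerivWithinAt_integral_of_continuousOn hI hflux ht₀ ht)).neg.div_const
    _).congr_deriv ?_
  rw [massRate]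
  field_simp
  ring

theorem IsForcedBurgers.hasLocalPrimitive (hu : IsForcedBurgers φ u I) (hI : I.OrdConnected)
    (ht : t ∈ I) : HasLocalPrimitive φ I t := by
  by_contra hbad
  obtain ⟨n, V, hV, ⟨⟨t₀, x₀⟩, htx, ht₀, hx₀⟩, hlip⟩ := exists_isOpen_lipschitzFrom
    (K := (I \ {s | HasLocalPrimitive φ I s}) ×ˢ Iio 0) (F := u)
    (isLocallyClosed_prod ((isLocallyClosed_of_ordConnected hI).inter
      isOpen_setOf_hasLocalPrimitive.isClosed_compl.isLocallyClosed) isOpen_Iio.isLocallyClosed)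
    ⟨(t, -1), ⟨ht, hbad⟩, mem_Iio.2 neg_one_lt_zero⟩ (prod_mono_left sdiff_subset)
    (fun s hs x hx => hu.differentiableWithinAt hs hx)
    fun s hs x hx => (hu.differentiableAt hs hx).differentiableWithinAt
  obtain ⟨T, hT, W, hW, hTW⟩ := mem_nhds_prod_iff.1 (hV.mem_nhds htx)
  obtain ⟨a, b, -, hab, habW⟩ := exists_Icc_mem_subset_of_mem_nhds
    (inter_mem hW (Iio_mem_nhds hx₀))
  have hab : a < b := (Icc_mem_nhds_iff.1 hab).1.trans (Icc_mem_nhds_iff.1 hab).2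
  have hb : b < 0 := (habW (right_mem_Icc.2 hab.le)).2
  refine ht₀.2 (hu.hasLocalPrimitive_of_hasDerivWithinAt_integral hI hab hb ht₀.1 ?_)
  filter_upwards [self_mem_nhdsWithin, nhdsWithin_le_nhds hT] with s hs hsT
  by_cases hgood : HasLocalPrimitive φ I s
  · exact hu.hasDerivWithinAt_integral_of_hasLocalPrimitive hI hgood (hab.trans hb) hb hs
  · refine hu.hasDerivWithinAt_integral_of_lipschitzFrom (hab.trans hb) hb hs (n := n) ?_
    intro x hx
    rw [uIcc_of_le hab.le] at hx
    exact (hlip (s, x) ⟨hTW ⟨hsT, (habW hx).1⟩, ⟨hs, hgood⟩, (habW hx).2⟩).1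

theorem IsForcedBurgers.hasDerivWithinAt_comp_characteristic {y : ℝ → ℝ}
    (hu : IsForcedBurgers φ u I) (hI : I.OrdConnected) (ht : t ∈ I) (hy₀ : ∀ s ∈ I, y s < 0)
    (hy : HasDerivWithinAt y (u t (y t)) I t) :
    HasDerivWithinAt (fun s => u s (y s)) (-(Real.exp (y t) * φ t)) I t := by
  obtain ⟨J, hJI, Φ, hJ, hJt, hΦ⟩ := (hu.hasLocalPrimitive hI ht).exists_ordConnected hI
  have hfderiv := (hu.mono hJI).hasFDerivWithinAt hJ hΦ (mem_of_mem_nhdsWithin ht hJt) (hy₀ t ht)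
  have hcurve : HasDerivWithinAt (fun s => (s, y s)) (1, u t (y t)) J t :=
    (hasDerivWithinAt_id t J).prodMk (hy.mono hJI)
  have hmaps : MapsTo (fun s => (s, y s)) J (J ×ˢ Iio 0) := fun s hs => ⟨hs, hy₀ s (hJI hs)⟩
  exact ((hfderiv.comp_hasDerivWithinAt (f := fun s => (s, y s)) t hcurve hmaps).congr_deriv
    (by simp [forcedBurgersFDeriv])).mono_of_mem_nhdsWithin hJt

end Primitive

section ForestFire

variable {φ : ℝ → ℝ} {X : ℝ → ℝ → ℝ} {ψ : ℝ → ℝ} {I : Set ℝ}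

theorem isForcedBurgers_one_sub_comp_exp {Xt Xz : ℝ → ℝ → ℝ}
    (hXt : ∀ t ∈ I, ∀ z ∈ Ioo (0 : ℝ) 1, HasDerivWithinAt (fun s => X s z) (Xt t z) I t)
    (hXz : ∀ t ∈ I, ∀ z ∈ Ioo (0 : ℝ) 1, HasDerivWithinAt (fun w => X t w) (Xz t z) (Ioo 0 1) z)
    (hPDE : ∀ t ∈ I, ∀ z ∈ Ioo (0 : ℝ) 1, Xt t z = z * Xz t z * (X t z - 1) + z * φ t) :
    IsForcedBurgers φ (fun t x => 1 - X t (Real.exp x)) I := fun t ht x hx => by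
  have hz : Real.exp x ∈ Ioo (0 : ℝ) 1 := ⟨Real.exp_pos x, Real.exp_lt_one_iff.2 hx⟩
  have hspace := (hXz t ht _ hz).hasDerivAt (Ioo_mem_nhds hz.1 hz.2)
  refine ⟨_, (hspace.comp x (Real.hasDerivAt_exp x)).const_sub 1,
    ((hXt t ht _ hz).const_sub 1).congr_deriv ?_⟩
  rw [hPDE t ht _ hz]
  ring

theorem hasDerivWithinAt_comp_characteristic
    (hX : IsForcedBurgers φ (fun t x => 1 - X t (Real.exp x)) I) (hI : I.OrdConnected)
    (hψ : ∀ t ∈ I, ψ t ∈ Ioo (0 : ℝ) 1)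
    (hψ' : ∀ t ∈ I, HasDerivWithinAt ψ (ψ t * (1 - X t (ψ t))) I t) {t : ℝ} (ht : t ∈ I) :
    HasDerivWithinAt (fun s => X s (ψ s)) (ψ t * φ t) I t := by
  have hlog : HasDerivWithinAt (fun s => Real.log (ψ s))
      (1 - X t (Real.exp (Real.log (ψ t)))) I t :=
    ((hψ' t ht).log (hψ t ht).1.ne').congr_deriv
      (by rw [Real.exp_log (hψ t ht).1, mul_div_cancel_left₀ _ (hψ t ht).1.ne'])
  have hchar := hX.hasDerivWithinAt_comp_characteristic hI ht
    (fun s hs => Real.log_neg (hψ s hs).1 (hψ s hs).2) hlog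
  refine ((hchar.const_sub 1).congr_deriv ?_).congr_of_mem (fun s hs => ?_) ht
  · rw [neg_neg, Real.exp_log (hψ t ht).1]
  · rw [sub_sub_cancel, Real.exp_log (hψ s hs).1]

theorem eq_of_hasDerivWithinAt_zero {E : Type*} [NormedAddCommGroup E] [NormedSpace ℝ E]
    {f : ℝ → E} (hI : I.OrdConnected) (hf : ∀ t ∈ I, HasDerivWithinAt f 0 I t) {s t : ℝ}
    (hs : s ∈ I) (ht : t ∈ I) : f t = f s := by
  have h := hI.convex.norm_image_sub_le_of_norm_hasDerivWithin_le (C := 0) hf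
    (fun _ _ => norm_zero.le) hs ht
  rwa [zero_mul, norm_le_zero_iff, sub_eq_zero] at h

theorem eq_mul_exp_of_hasDerivWithinAt {f : ℝ → ℝ} {k : ℝ} (hI : I.OrdConnected)
    (hf : ∀ t ∈ I, HasDerivWithinAt f (f t * k) I t) {t₀ t : ℝ} (ht₀ : t₀ ∈ I) (ht : t ∈ I) :
    f t = f t₀ * Real.exp ((t - t₀) * k) := by
  have hconst : f t * Real.exp (-((t - t₀) * k)) = f t₀ * Real.exp (-((t₀ - t₀) * k)) :=
    eq_of_hasDerivWithinAt_zero hI (fun s hs => ((hf s hs).mul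
      ((((hasDerivWithinAt_id s I).sub_const t₀).mul_const k).neg.exp)).congr_deriv
        (by simp only [id]; ring)) ht₀ ht
  rw [Real.exp_neg, ← div_eq_mul_inv, div_eq_iff (Real.exp_ne_zero _)] at hconst
  simpa using hconst

end ForestFire

theorem stmt13_general (I : Set ℝ) (hIc : I.OrdConnected)
    (φ : ℝ → ℝ) (X Xt Xz : ℝ → ℝ → ℝ)
    (hXt : ∀ t ∈ I, ∀ z ∈ Set.Ioo (0 : ℝ) 1,
      HasDerivWithinAt (fun s => X s z) (Xt t z) I t)
    (hXz : ∀ t ∈ I, ∀ z ∈ Set.Ioo (0 : ℝ) 1,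
      HasDerivWithinAt (fun w => X t w) (Xz t z) (Set.Ioo 0 1) z)
    (hPDE : ∀ t ∈ I, ∀ z ∈ Set.Ioo (0 : ℝ) 1,
      Xt t z = z * Xz t z * (X t z - 1) + z * φ t)
    (ψ : ℝ → ℝ) (hψr : ∀ t ∈ I, ψ t ∈ Set.Ioo (0 : ℝ) 1)
    (hψd : ∀ t ∈ I, HasDerivWithinAt ψ (ψ t * (1 - X t (ψ t))) I t) :
    (∀ t ∈ I, HasDerivWithinAt (fun s => X s (ψ s)) (ψ t * φ t) I t) ∧
    ((∀ t ∈ I, φ t = 0) →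
      ∀ t₀ ∈ I, ∀ t ∈ I,
        X t (ψ t) = X t₀ (ψ t₀) ∧
        ψ t = ψ t₀ * Real.exp ((t - t₀) * (1 - X t₀ (ψ t₀)))) := by
  have hX := isForcedBurgers_one_sub_comp_exp hXt hXz hPDE
  have hderiv : ∀ t ∈ I, HasDerivWithinAt (fun s => X s (ψ s)) (ψ t * φ t) I t :=
    fun t ht => hasDerivWithinAt_comp_characteristic hX hIc hψr hψd ht
  refine ⟨hderiv, fun hφ t₀ ht₀ t ht => ?_⟩
  have hconst : ∀ s ∈ I, X s (ψ s) = X t₀ (ψ t₀) := fun s hs =>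
    eq_of_hasDerivWithinAt_zero hIc
      (fun r hr => (hderiv r hr).congr_deriv (by rw [hφ r hr, mul_zero])) ht₀ hs
  exact ⟨hconst t ht, eq_mul_exp_of_hasDerivWithinAt hIc
    (fun s hs => hconst s hs ▸ hψd s hs) ht₀ ht⟩

theorem stmt13 (I : Set ℝ) (hI : I ⊆ Set.Ici 0) (hIc : I.OrdConnected)
    (φ : ℝ → ℝ) (X Xt Xz : ℝ → ℝ → ℝ)
    (hXt : ∀ t ∈ I, ∀ z ∈ Set.Ioo (0 : ℝ) 1,
      HasDerivWithinAt (fun s => X s z) (Xt t z) I t)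
    (hXz : ∀ t ∈ I, ∀ z ∈ Set.Ioo (0 : ℝ) 1,
      HasDerivWithinAt (fun w => X t w) (Xz t z) (Set.Ioo 0 1) z)
    (hPDE : ∀ t ∈ I, ∀ z ∈ Set.Ioo (0 : ℝ) 1,
      Xt t z = z * Xz t z * (X t z - 1) + z * φ t)
    (ψ : ℝ → ℝ) (hψr : ∀ t ∈ I, ψ t ∈ Set.Ioo (0 : ℝ) 1)
    (hψd : ∀ t ∈ I, HasDerivWithinAt ψ (ψ t * (1 - X t (ψ t))) I t) :
    (∀ t ∈ I, HasDerivWithinAt (fun s => X s (ψ s)) (ψ t * φ t) I t) ∧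
    ((∀ t ∈ I, φ t = 0) →
      ∀ t₀ ∈ I, ∀ t ∈ I,
        X t (ψ t) = X t₀ (ψ t₀) ∧
        ψ t = ψ t₀ * Real.exp ((t - t₀) * (1 - X t₀ (ψ t₀)))) :=
  stmt13_general I hIc φ X Xt Xz hXt hXz hPDE ψ hψr hψd
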